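/- (Li–Ombrosi–Pérez, maximal-function case of Sawyer's conjecture) Let u and v be weights on ℝ^n with u ∈ A_1 and v ∈ A_∞. Then there exists a constant C, depending only on the A_1 constant of u and the A_∞ constant of v, such that for every locally integrable f, ‖M(fv)/v‖_{L^{1,∞}(uv)} ≤ C ∫_{ℝ^n} |f| u v, where uv denotes the weight u·v. -/

import Mathlib

open MeasureTheory ENNReal Set

noncomputable section

/-- Euclidean space `ℝ^n`. -/
abbrev ESp (n : ℕ) := EuclideanSpace ℝ (Fin n)

/-- An axis-parallel cube with positive finite side length. -/
def IsCube {n : ℕ} (Q : Set (ESp n)) : Prop :=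
  ∃ (c : Fin n → ℝ) (h : ℝ), 0 < h ∧ Q = {x : ESp n | ∀ i, c i ≤ x i ∧ x i ≤ c i + h}

/-- The measure `w(E) = ∫_E w` associated to a weight `w`. -/
def wMeas {n : ℕ} (w : ESp n → ℝ) (E : Set (ESp n)) : ℝ≥0∞ :=
  ∫⁻ x in E, ENNReal.ofReal (w x)

/-- A weight: a nonnegative locally integrable function, positive (and finite) a.e. -/
def IsWeight {n : ℕ} (w : ESp n → ℝ) : Prop :=
  Measurable w ∧ (∀ x, 0 ≤ w x) ∧ (∀ᵐ x ∂(volume : Measure (ESp n)), 0 < w x) ∧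
    ∀ Q : Set (ESp n), IsCube Q → wMeas w Q < ⊤

/-- `C` is an admissible `A₁` constant for `w`. -/
def A1Const {n : ℕ} (w : ESp n → ℝ) (C : ℝ≥0∞) : Prop :=
  ∀ Q : Set (ESp n), IsCube Q →
    (volume Q)⁻¹ * wMeas w Q ≤ C * essInf (fun x => ENNReal.ofReal (w x)) (volume.restrict Q)

/-- The Muckenhoupt class `A₁`. -/
def IsA1 {n : ℕ} (w : ESp n → ℝ) : Prop := ∃ C : ℝ≥0∞, C < ⊤ ∧ A1Const w C

/-- The Muckenhoupt class `A_p`, `1 < p < ∞`. -/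
def IsAp {n : ℕ} (w : ESp n → ℝ) (p : ℝ) : Prop :=
  ∃ C : ℝ≥0∞, C < ⊤ ∧ ∀ Q : Set (ESp n), IsCube Q →
    ((volume Q)⁻¹ * wMeas w Q) *
      ((volume Q)⁻¹ * ∫⁻ x in Q, ENNReal.ofReal (w x) ^ (1 - p / (p - 1))) ^ (p - 1) ≤ C

/-- The class `A_∞ = ⋃_{p ≥ 1} A_p`. -/
def IsAinfty {n : ℕ} (w : ESp n → ℝ) : Prop :=
  IsA1 w ∨ ∃ p : ℝ, 1 < p ∧ IsAp w p

/-- The Hardy–Littlewood maximal function (over cubes). -/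
def maxFn {n : ℕ} (f : ESp n → ℝ) (x : ESp n) : ℝ≥0∞ :=
  ⨆ (Q : Set (ESp n)) (_ : IsCube Q) (_ : x ∈ Q),
    (volume Q)⁻¹ * ∫⁻ y in Q, ENNReal.ofReal |f y|

/-- The Fujii–Wilson `A_∞` constant. -/
def FW {n : ℕ} (w : ESp n → ℝ) : ℝ≥0∞ :=
  ⨆ (Q : Set (ESp n)) (_ : IsCube Q),
    (wMeas w Q)⁻¹ * ∫⁻ x in Q, maxFn (Q.indicator w) x

/-- The weighted weak `L^{q,∞}(w)` quasinorm of `g`. -/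
def wnorm {n : ℕ} (g : ESp n → ℝ≥0∞) (q : ℝ) (w : ESp n → ℝ) : ℝ≥0∞ :=
  ⨆ (t : ℝ) (_ : 0 < t), ENNReal.ofReal t * (wMeas w {x | ENNReal.ofReal t < g x}) ^ (1 / q)

/-- The weighted `L¹(w)` norm. -/
def L1norm {n : ℕ} (f : ESp n → ℝ) (w : ESp n → ℝ) : ℝ≥0∞ :=
  ∫⁻ x, ENNReal.ofReal (|f x| * w x)

/-- The fractional maximal operator `M_α`. -/
def fracM {n : ℕ} (α : ℝ) (f : ESp n → ℝ) (x : ESp n) : ℝ≥0∞ :=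
  ⨆ (Q : Set (ESp n)) (_ : IsCube Q) (_ : x ∈ Q),
    ((volume Q) ^ (1 - α / (n : ℝ)))⁻¹ * ∫⁻ y in Q, ENNReal.ofReal |f y|

/-- The fractional integral (Riesz potential) `I_α`. -/
def fracI {n : ℕ} (α : ℝ) (f : ESp n → ℝ) (x : ESp n) : ℝ :=
  ∫ y, f y / dist x y ^ ((n : ℝ) - α)

/-- The multi(sub)linear maximal function `𝓜`. -/
def multiM {n m : ℕ} (f : Fin m → ESp n → ℝ) (x : ESp n) : ℝ≥0∞ :=
  ⨆ (Q : Set (ESp n)) (_ : IsCube Q) (_ : x ∈ Q),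
    ∏ i, (volume Q)⁻¹ * ∫⁻ y in Q, ENNReal.ofReal |f i y|

/-- The multi(sub)linear fractional maximal operator `𝓜_α`. -/
def multiMα {n m : ℕ} (α : ℝ) (f : Fin m → ESp n → ℝ) (x : ESp n) : ℝ≥0∞ :=
  ⨆ (Q : Set (ESp n)) (_ : IsCube Q) (_ : x ∈ Q),
    ∏ i, ((volume Q) ^ (1 - α / ((m : ℝ) * (n : ℝ))))⁻¹ * ∫⁻ y in Q, ENNReal.ofReal |f i y|

/-- The multilinear fractional integral `𝓘_α`. -/
def multiIα {n m : ℕ} (α : ℝ) (f : Fin m → ESp n → ℝ) (x : ESp n) : ℝ :=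
  ∫ y : Fin m → ESp n, (∏ i, f i (y i)) / (∑ i, dist x (y i)) ^ ((m : ℝ) * (n : ℝ) - α)

/-- The multilinear class `A_{(1,…,1)}`. -/
def A11 {n m : ℕ} (w : Fin m → ESp n → ℝ) : Prop :=
  ∃ C : ℝ≥0∞, C < ⊤ ∧ ∀ Q : Set (ESp n), IsCube Q →
    ((volume Q)⁻¹ * ∫⁻ x in Q, ENNReal.ofReal (∏ i, w i x ^ ((m : ℝ)⁻¹))) ^ (m : ℝ) *
      ∏ i, (essInf (fun x => ENNReal.ofReal (w i x)) (volume.restrict Q))⁻¹ ≤ C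

/-!
Since `u ∈ A₁` and `v` satisfies the Fujii–Wilson condition, the measures `u dx` and `v dx` decay
geometrically: a subset of a cube that occupies at most `a⁻ᵐ` of its volume carries at most `2⁻ᵐ` of
its measure, and so does, for `u dx`, the part of the cube where `v` is below `a⁻ᵐ` times its mean.

By the one-third trick it suffices to bound `{M_D ν ≥ v}` for a dyadic grid and `ν = |f| v dx / t`.
Split this set along the levels `a ^ k < v ≤ a ^ (k + 1)`. At level `k` it is covered by the maximal
dyadic cubes with `ν`-average at least `a ^ k`. If the `v`-average of such a cube `Q` lies at level
`K Q`, the two decay properties show that the level set carries at most a multiple of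
`2^{-|K Q - k|} u(Q)`. It remains to sum over the cubes with a fixed gap `l = K Q - k`. Maximality
forces `K` to increase strictly as these cubes shrink, so by the decay of `v dx` they form a
Carleson family with respect to `ν`. The Carleson embedding theorem, together with
`u(Q) / |Q| ≤ C u` on `Q`, bounds the sum by a multiple of `∫ u dν`, and the factors `2^{-|l|}` are
summable.
-/

section Cubes

variable {n : ℕ}

/-- The half-open axis-parallel cube with lower corner `c` and side length `h`. -/
def halfOpenCube (c : Fin n → ℝ) (h : ℝ) : Set (ESp n) :=
  {x | ∀ i, c i ≤ x i ∧ x i < c i + h}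

/-- The closed axis-parallel cube with lower corner `c` and side length `h`. -/
def closedCube (c : Fin n → ℝ) (h : ℝ) : Set (ESp n) :=
  {x | ∀ i, c i ≤ x i ∧ x i ≤ c i + h}

lemma isCube_closedCube (c : Fin n → ℝ) {h : ℝ} (hh : 0 < h) : IsCube (closedCube c h) :=
  ⟨c, h, hh, rfl⟩

lemma halfOpenCube_subset_closedCube (c : Fin n → ℝ) (h : ℝ) :
    halfOpenCube c h ⊆ closedCube c h :=
  fun _ hx i => ⟨(hx i).1, (hx i).2.le⟩

lemma halfOpenCube_eq_preimage (c : Fin n → ℝ) (h : ℝ) :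
    halfOpenCube c h =
      (@WithLp.ofLp 2 (Fin n → ℝ)) ⁻¹' (pi univ fun i => Ico (c i) (c i + h)) := by
  ext x; simp [halfOpenCube]

lemma closedCube_eq_preimage (c : Fin n → ℝ) (h : ℝ) :
    closedCube c h = (@WithLp.ofLp 2 (Fin n → ℝ)) ⁻¹' (Icc c fun i => c i + h) := by
  ext x; simp [closedCube, Pi.le_def, forall_and]

lemma measurableSet_halfOpenCube (c : Fin n → ℝ) (h : ℝ) : MeasurableSet (halfOpenCube c h) := by
  rw [halfOpenCube_eq_preimage]
  exact (PiLp.volume_preserving_ofLp (Fin n)).measurable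
    (MeasurableSet.univ_pi fun _ => measurableSet_Ico)

lemma measurableSet_closedCube (c : Fin n → ℝ) (h : ℝ) : MeasurableSet (closedCube c h) := by
  rw [closedCube_eq_preimage]
  exact (PiLp.volume_preserving_ofLp (Fin n)).measurable measurableSet_Icc

lemma volume_halfOpenCube (c : Fin n → ℝ) (h : ℝ) :
    volume (halfOpenCube c h) = ENNReal.ofReal h ^ n := by
  rw [halfOpenCube_eq_preimage, (PiLp.volume_preserving_ofLp (Fin n)).measure_preimage
    (MeasurableSet.univ_pi fun _ => measurableSet_Ico).nullMeasurableSet, Real.volume_pi_Ico]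
  simp

lemma volume_closedCube (c : Fin n → ℝ) (h : ℝ) :
    volume (closedCube c h) = ENNReal.ofReal h ^ n := by
  rw [closedCube_eq_preimage, (PiLp.volume_preserving_ofLp (Fin n)).measure_preimage
    measurableSet_Icc.nullMeasurableSet, Real.volume_Icc_pi]
  simp

lemma IsCube.volume_ne_zero {Q : Set (ESp n)} (hQ : IsCube Q) : volume Q ≠ 0 := by
  obtain ⟨c, h, hh, rfl⟩ := hQ
  exact (volume_closedCube c h).trans_ne (by positivity)

lemma IsCube.volume_ne_top {Q : Set (ESp n)} (hQ : IsCube Q) : volume Q ≠ ⊤ := by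
  obtain ⟨c, h, -, rfl⟩ := hQ
  exact (volume_closedCube c h).trans_ne (by finiteness)

lemma halfOpenCube_ae_eq_closedCube (c : Fin n → ℝ) (h : ℝ) :
    halfOpenCube c h =ᵐ[volume] closedCube c h :=
  ae_eq_of_subset_of_measure_ge (halfOpenCube_subset_closedCube c h)
    (by rw [volume_halfOpenCube, volume_closedCube])
    (measurableSet_halfOpenCube c h).nullMeasurableSet (by rw [volume_closedCube]; finiteness)

/-- The half-open cubes of positive side length. Dyadic arguments run over these rather than over
the closed cubes of `IsCube`, because they can be partitioned exactly. -/
def IsHalfOpenCube (Q : Set (ESp n)) : Prop :=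
  ∃ (c : Fin n → ℝ) (h : ℝ), 0 < h ∧ Q = halfOpenCube c h

namespace IsHalfOpenCube

variable {Q : Set (ESp n)}

lemma measurableSet (hQ : IsHalfOpenCube Q) : MeasurableSet Q := by
  obtain ⟨c, h, -, rfl⟩ := hQ
  exact measurableSet_halfOpenCube c h

lemma volume_ne_zero (hQ : IsHalfOpenCube Q) : volume Q ≠ 0 := by
  obtain ⟨c, h, hh, rfl⟩ := hQ
  rw [volume_halfOpenCube]; positivity

lemma volume_ne_top (hQ : IsHalfOpenCube Q) : volume Q ≠ ⊤ := by
  obtain ⟨c, h, -, rfl⟩ := hQ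
  rw [volume_halfOpenCube]; finiteness

end IsHalfOpenCube

end Cubes

/-- A dyadic grid: the system of cubes obtained from a half-open root cube, and all its translates
by multiples of its side, by repeated bisection of the sides. -/
structure DyadicGrid (n : ℕ) where
  /-- The lower corner of the root cube. -/
  origin : Fin n → ℝ
  /-- The side length of the root cube. -/
  side : ℝ
  side_pos : 0 < side

namespace DyadicGrid

variable {n : ℕ} (D : DyadicGrid n)

/-- The root cube of a dyadic grid. -/
def root : Set (ESp n) := halfOpenCube D.origin D.side

/-- The dyadic cube of generation `j` that contains `x`; generation `0` has the size of the root. -/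
def cube (j : ℕ) (x : ESp n) : Set (ESp n) :=
  {y | ∀ i, ⌊2 ^ j * ((y i - D.origin i) / D.side)⌋ = ⌊2 ^ j * ((x i - D.origin i) / D.side)⌋}

/-- The family of all cubes of a dyadic grid. -/
def cubes : Set (Set (ESp n)) := {Q | ∃ j x, Q = D.cube j x}

variable {D}

lemma cube_mem_cubes (j : ℕ) (x : ESp n) : D.cube j x ∈ D.cubes := ⟨j, x, rfl⟩

lemma mem_cube_self (j : ℕ) (x : ESp n) : x ∈ D.cube j x := fun _ => rfl

lemma cube_eq_of_mem {j : ℕ} {x y : ESp n} (hy : y ∈ D.cube j x) : D.cube j y = D.cube j x :=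
  ext fun _ => ⟨fun hz i => (hz i).trans (hy i), fun hz i => (hz i).trans (hy i).symm⟩

lemma exists_eq_cube_of_mem {Q : Set (ESp n)} (hQ : Q ∈ D.cubes) {x : ESp n} (hx : x ∈ Q) :
    ∃ j, Q = D.cube j x := by
  obtain ⟨j, y, rfl⟩ := hQ
  exact ⟨j, (cube_eq_of_mem hx).symm⟩

lemma nonempty_of_mem_cubes {Q : Set (ESp n)} (hQ : Q ∈ D.cubes) : Q.Nonempty := by
  obtain ⟨j, x, rfl⟩ := hQ
  exact ⟨x, mem_cube_self j x⟩

lemma cube_succ_subset (j : ℕ) (x : ESp n) : D.cube (j + 1) x ⊆ D.cube j x := by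
  have floor_halve (t : ℝ) : ⌊2 ^ j * t⌋ = ⌊2 ^ (j + 1) * t⌋ / 2 := by
    rw [← Nat.cast_ofNat (R := ℤ), ← Int.floor_div_natCast]
    congr 1
    rw [pow_succ, Nat.cast_ofNat]
    ring
  intro y hy i
  rw [floor_halve, floor_halve, hy i]

lemma cube_anti (x : ESp n) : Antitone fun j => D.cube j x :=
  antitone_nat_of_succ_le fun j => cube_succ_subset j x

lemma cube_eq_halfOpenCube (j : ℕ) (x : ESp n) :
    D.cube j x = halfOpenCube
      (fun i => D.origin i + D.side / 2 ^ j * ⌊2 ^ j * ((x i - D.origin i) / D.side)⌋)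
      (D.side / 2 ^ j) := by
  ext y
  refine forall_congr' fun i => ?_
  have hs := D.side_pos
  have hp : 0 < D.side / 2 ^ j := by positivity
  have hscale : 2 ^ j * ((y i - D.origin i) / D.side) =
      (y i - D.origin i) / (D.side / 2 ^ j) := by field_simp
  rw [Int.floor_eq_iff, hscale, le_div_iff₀ hp, div_lt_iff₀ hp]
  constructor <;> rintro ⟨h1, h2⟩ <;> constructor <;> linarith

lemma isHalfOpenCube_cube (j : ℕ) (x : ESp n) : IsHalfOpenCube (D.cube j x) :=
  ⟨_, _, div_pos D.side_pos (by positivity), cube_eq_halfOpenCube j x⟩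

lemma isHalfOpenCube_of_mem_cubes {Q : Set (ESp n)} (hQ : Q ∈ D.cubes) : IsHalfOpenCube Q := by
  obtain ⟨j, x, rfl⟩ := hQ
  exact isHalfOpenCube_cube j x

lemma isHalfOpenCube_root : IsHalfOpenCube D.root := ⟨D.origin, D.side, D.side_pos, rfl⟩

lemma volume_cube (j : ℕ) (x : ESp n) :
    volume (D.cube j x) = 2 ^ n * volume (D.cube (j + 1) x) := by
  have hside : D.side / 2 ^ j = 2 * (D.side / 2 ^ (j + 1)) := by rw [pow_succ]; field_simp
  rw [cube_eq_halfOpenCube, cube_eq_halfOpenCube, volume_halfOpenCube, volume_halfOpenCube, hside,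
    ENNReal.ofReal_mul zero_le_two, ENNReal.ofReal_ofNat, mul_pow]

lemma cube_zero_of_mem_root {x : ESp n} (hx : x ∈ D.root) : D.cube 0 x = D.root := by
  have hs := D.side_pos
  have mem_root (y : ESp n) :
      y ∈ D.root ↔ ∀ i, ⌊2 ^ 0 * ((y i - D.origin i) / D.side)⌋ = 0 := by
    refine forall_congr' fun i => ?_
    rw [Int.floor_eq_iff, pow_zero, one_mul, Int.cast_zero, le_div_iff₀ hs, div_lt_iff₀ hs]
    constructor <;> rintro ⟨h1, h2⟩ <;> constructor <;> linarith
  ext y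
  rw [mem_root y]
  exact forall_congr' fun i => by rw [(mem_root x).1 hx i]

lemma cube_subset_root {x : ESp n} (hx : x ∈ D.root) (j : ℕ) : D.cube j x ⊆ D.root :=
  cube_zero_of_mem_root hx ▸ cube_anti x (Nat.zero_le j)

lemma countable_cubes : D.cubes.Countable := by
  refine (countable_range fun p : ℕ × (Fin n → ℤ) =>
    {y : ESp n | ∀ i, ⌊2 ^ p.1 * ((y i - D.origin i) / D.side)⌋ = p.2 i}).mono ?_
  rintro Q ⟨j, x, rfl⟩
  exact ⟨(j, fun i => ⌊2 ^ j * ((x i - D.origin i) / D.side)⌋), rfl⟩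

lemma subset_or_subset {Q R : Set (ESp n)} (hQ : Q ∈ D.cubes) (hR : R ∈ D.cubes)
    (hQR : (Q ∩ R).Nonempty) : Q ⊆ R ∨ R ⊆ Q := by
  obtain ⟨z, hzQ, hzR⟩ := hQR
  obtain ⟨j, rfl⟩ := exists_eq_cube_of_mem hQ hzQ
  obtain ⟨k, rfl⟩ := exists_eq_cube_of_mem hR hzR
  exact (le_total j k).symm.imp (fun h => cube_anti z h) fun h => cube_anti z h

end DyadicGrid

lemma IsHalfOpenCube.exists_root_eq {n : ℕ} {Q : Set (ESp n)} (hQ : IsHalfOpenCube Q) :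
    ∃ D : DyadicGrid n, D.root = Q := by
  obtain ⟨c, h, hh, rfl⟩ := hQ
  exact ⟨⟨c, h, hh⟩, rfl⟩

/-- The members of a family of sets that are maximal for inclusion. -/
def maximalCubes {n : ℕ} (S : Set (Set (ESp n))) : Set (Set (ESp n)) := {Q | Maximal (· ∈ S) Q}

lemma maximalCubes_subset {n : ℕ} (S : Set (Set (ESp n))) : maximalCubes S ⊆ S :=
  fun _ hQ => hQ.prop

namespace DyadicGrid

variable {n : ℕ} {D : DyadicGrid n} {S : Set (Set (ESp n))}

lemma exists_subset_maximalCubes (hS : S ⊆ D.cubes) {Q : Set (ESp n)} (hQ : Q ∈ S) :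
    ∃ P ∈ maximalCubes S, Q ⊆ P := by
  classical
  obtain ⟨j, x, rfl⟩ := hS hQ
  have hex : ∃ i, D.cube i x ∈ S := ⟨j, hQ⟩
  refine ⟨D.cube (Nat.find hex) x, ⟨Nat.find_spec hex, fun R hR hsub => ?_⟩,
    cube_anti x (Nat.find_min' hex hQ)⟩
  obtain ⟨k, rfl⟩ := exists_eq_cube_of_mem (hS hR) (hsub (mem_cube_self _ x))
  exact cube_anti x (Nat.find_min' hex hR)

lemma sUnion_maximalCubes (hS : S ⊆ D.cubes) : ⋃₀ maximalCubes S = ⋃₀ S := by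
  refine (sUnion_subset_sUnion (maximalCubes_subset S)).antisymm ?_
  rintro x ⟨Q, hQ, hx⟩
  obtain ⟨P, hP, hQP⟩ := exists_subset_maximalCubes hS hQ
  exact ⟨P, hP, hQP hx⟩

lemma pairwise_disjoint_maximalCubes (hS : S ⊆ D.cubes) :
    (maximalCubes S).Pairwise Disjoint := by
  intro P hP Q hQ hne
  by_contra hmeet
  rcases subset_or_subset (hS hP.prop) (hS hQ.prop) (not_disjoint_iff_nonempty_inter.1 hmeet)
    with hPQ | hQP
  · exact hne (hP.eq_of_subset hQ.prop hPQ)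
  · exact hne (hQ.eq_of_subset hP.prop hQP).symm

lemma countable_of_subset_cubes (hS : S ⊆ D.cubes) : S.Countable := countable_cubes.mono hS

lemma measurableSet_sUnion (hS : S ⊆ D.cubes) : MeasurableSet (⋃₀ S) :=
  .sUnion (countable_of_subset_cubes hS) fun _ hQ =>
    (isHalfOpenCube_of_mem_cubes (hS hQ)).measurableSet

lemma measure_sUnion_eq_tsum_maximalCubes (hS : S ⊆ D.cubes) (μ : Measure (ESp n)) :
    μ (⋃₀ S) = ∑' Q : maximalCubes S, μ Q := by
  have hM := (maximalCubes_subset S).trans hS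
  rw [← sUnion_maximalCubes hS, measure_sUnion (countable_of_subset_cubes hM)
    (pairwise_disjoint_maximalCubes hS)
    fun _ hQ => (isHalfOpenCube_of_mem_cubes (hM hQ)).measurableSet]

lemma measure_sUnion_le_mul (hS : S ⊆ D.cubes) {μ ν : Measure (ESp n)} {a : ℝ≥0∞}
    (h : ∀ P ∈ maximalCubes S, μ P ≤ a * ν P) : μ (⋃₀ S) ≤ a * ν (⋃₀ S) := by
  rw [measure_sUnion_eq_tsum_maximalCubes hS, measure_sUnion_eq_tsum_maximalCubes hS,
    ← ENNReal.tsum_mul_left]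
  exact ENNReal.tsum_le_tsum fun P => h P P.2

lemma measure_inter_sUnion_le_mul (hS : S ⊆ D.cubes) {μ ν : Measure (ESp n)} {a : ℝ≥0∞}
    (E : Set (ESp n)) (h : ∀ P ∈ maximalCubes S, μ (E ∩ P) ≤ a * ν P) :
    μ (E ∩ ⋃₀ S) ≤ a * ν (⋃₀ S) := by
  have hrestrict {P : Set (ESp n)} (hP : MeasurableSet P) : μ.restrict E P = μ (E ∩ P) := by
    rw [Measure.restrict_apply hP, inter_comm]
  rw [← hrestrict (measurableSet_sUnion hS)]
  refine measure_sUnion_le_mul hS fun P hP => ?_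
  rw [hrestrict (isHalfOpenCube_of_mem_cubes (hS hP.prop)).measurableSet]
  exact h P hP

variable (D) in
/-- The cubes of the grid inside the root that satisfy `p`; the maximal ones are those selected by
the stopping-time argument with criterion `p`. -/
def stopping (p : Set (ESp n) → Prop) : Set (Set (ESp n)) := {R ∈ D.cubes | R ⊆ D.root ∧ p R}

variable {p : Set (ESp n) → Prop}

lemma stopping_subset_cubes : D.stopping p ⊆ D.cubes := fun _ hR => hR.1

lemma sUnion_stopping_subset_root : ⋃₀ D.stopping p ⊆ D.root := sUnion_subset fun _ hR => hR.2.1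

lemma exists_parent_of_mem_maximalCubes_stopping {R : Set (ESp n)}
    (hR : R ∈ maximalCubes (D.stopping p)) (hroot : ¬ p D.root) :
    ∃ j x, R = D.cube (j + 1) x ∧ ¬ p (D.cube j x) := by
  classical
  obtain ⟨x, hx⟩ := nonempty_of_mem_cubes hR.prop.1
  have hxroot := hR.prop.2.1 hx
  obtain ⟨k, hk⟩ := exists_eq_cube_of_mem hR.prop.1 hx
  have hex : ∃ j, p (D.cube j x) := ⟨k, hk ▸ hR.prop.2.2⟩
  have hfind : D.cube (Nat.find hex) x ∈ D.stopping p :=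
    ⟨cube_mem_cubes _ x, cube_subset_root hxroot _, Nat.find_spec hex⟩
  have hR_eq : R = D.cube (Nat.find hex) x := hR.eq_of_subset hfind <|
    hk ▸ cube_anti x (Nat.find_min' hex (hk ▸ hR.prop.2.2))
  obtain ⟨j, hj⟩ : ∃ j, Nat.find hex = j + 1 := by
    refine Nat.exists_eq_succ_of_ne_zero fun h0 => hroot ?_
    rw [← cube_zero_of_mem_root hxroot, ← h0]
    exact Nat.find_spec hex
  exact ⟨j, x, hj ▸ hR_eq, Nat.find_min hex (by omega)⟩

end DyadicGrid

section Differentiation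

variable {n : ℕ}

lemma closedCube_eq_preimage_closedBall (c : Fin n → ℝ) {h : ℝ} (hh : 0 ≤ h) :
    closedCube c h = (@WithLp.ofLp 2 (Fin n → ℝ)) ⁻¹'
      Metric.closedBall (fun i => c i + h / 2) (h / 2) := by
  rw [closedCube_eq_preimage, closedBall_pi _ (by positivity), ← pi_univ_Icc]
  refine congrArg _ (congrArg _ (funext fun i => ?_))
  rw [Real.closedBall_eq_Icc]
  congr 1 <;> ring

/-- Axis-parallel cubes are the closed balls of the sup metric on `Fin n → ℝ`, whose Lebesgue
measure is doubling; the differentiation theorem for such measures is transported from there. -/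
lemma ae_tendsto_lintegral_div_closedCube {w : ESp n → ℝ≥0∞} (hw : Measurable w)
    (hfin : ∫⁻ x, w x ≠ ⊤) :
    ∀ᵐ x : ESp n, ∀ (c : ℕ → Fin n → ℝ) (h : ℕ → ℝ), (∀ j, 0 < h j) →
      Filter.Tendsto h Filter.atTop (nhds 0) → (∀ j, x ∈ closedCube (c j) (h j)) →
      Filter.Tendsto
        (fun j => (∫⁻ y in closedCube (c j) (h j), w y) / volume (closedCube (c j) (h j)))
        Filter.atTop (nhds (w x)) := by
  set w' : (Fin n → ℝ) → ℝ≥0∞ := fun z => w (WithLp.toLp 2 z)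
  have hmp := PiLp.volume_preserving_ofLp (Fin n)
  have hw'm : Measurable w' := hw.comp (PiLp.volume_preserving_toLp (Fin n)).measurable
  have hw'fin : ∫⁻ z, w' z ≠ ⊤ := by
    rw [← hmp.lintegral_comp hw'm]; exact hfin
  have hae := (IsUnifLocDoublingMeasure.vitaliFamily (volume : Measure (Fin n → ℝ))
    1).ae_tendsto_lintegral_div' hw'm hw'fin
  filter_upwards [hmp.quasiMeasurePreserving.ae hae] with x hx c h hpos hlim hmem
  have hball (j) := closedCube_eq_preimage_closedBall (c j) (hpos j).le
  have hradius : Filter.Tendsto (fun j => h j / 2) Filter.atTop (nhdsWithin 0 (Ioi 0)) :=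
    tendsto_nhdsWithin_iff.2 ⟨by simpa using hlim.div_const 2,
      Filter.Eventually.of_forall fun j => half_pos (hpos j)⟩
  refine (hx.comp (IsUnifLocDoublingMeasure.tendsto_closedBall_filterAt volume (K := 1)
    (x := x.ofLp) (fun j i => c j i + h j / 2) _ hradius
    (Filter.Eventually.of_forall fun j => ?_))).congr fun j => ?_
  · rw [one_mul]; exact (hball j ▸ hmem j :)
  · rw [Function.comp_apply, hball, ← hmp.setLIntegral_comp_preimage
      Metric.isClosed_closedBall.measurableSet hw'm, hmp.measure_preimage
      Metric.isClosed_closedBall.measurableSet.nullMeasurableSet]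

namespace DyadicGrid

variable {D : DyadicGrid n} {w : ESp n → ℝ≥0∞}

lemma ae_tendsto_withDensity_cube_div (hw : Measurable w)
    (hfin : volume.withDensity w D.root ≠ ⊤) :
    ∀ᵐ x : ESp n, x ∈ D.root → Filter.Tendsto
      (fun j => volume.withDensity w (D.cube j x) / volume (D.cube j x))
      Filter.atTop (nhds (w x)) := by
  have hroot := D.isHalfOpenCube_root.measurableSet
  have hfin' : ∫⁻ x, D.root.indicator w x ≠ ⊤ := by
    rwa [lintegral_indicator hroot, ← withDensity_apply _ hroot]
  filter_upwards [ae_tendsto_lintegral_div_closedCube (hw.indicator hroot) hfin'] with x hx hxroot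
  have hlim : Filter.Tendsto (fun j : ℕ => D.side / 2 ^ j) Filter.atTop (nhds 0) := by
    simpa [div_eq_mul_inv] using (tendsto_pow_atTop_nhds_zero_of_lt_one
      (r := (2⁻¹ : ℝ)) (by norm_num) (by norm_num)).const_mul D.side
  have hconv := hx _ _ (fun j => div_pos D.side_pos (by positivity)) hlim fun j =>
    halfOpenCube_subset_closedCube _ _ (cube_eq_halfOpenCube j x ▸ mem_cube_self j x)
  rw [indicator_of_mem hxroot] at hconv
  refine hconv.congr fun j => ?_
  rw [← setLIntegral_congr (halfOpenCube_ae_eq_closedCube _ _),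
    ← measure_congr (halfOpenCube_ae_eq_closedCube _ _), ← cube_eq_halfOpenCube,
    withDensity_apply _ (isHalfOpenCube_cube j x).measurableSet]
  congr 1
  exact setLIntegral_congr_fun (isHalfOpenCube_cube j x).measurableSet fun y hy =>
    indicator_of_mem (cube_subset_root hxroot j hy) _

variable (D) in
/-- The cubes below the root over which the average of `μ` exceeds `t`, as in the
Calderón–Zygmund decomposition. -/
def denseCubes (μ : Measure (ESp n)) (t : ℝ≥0∞) : Set (Set (ESp n)) :=
  D.stopping fun R => t * volume R < μ R

variable (D) in
/-- The cubes below the root over which the average of `μ` is less than `t`. -/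
def sparseCubes (μ : Measure (ESp n)) (t : ℝ≥0∞) : Set (Set (ESp n)) :=
  D.stopping fun R => μ R < t * volume R

lemma ae_superlevel_le_sUnion_denseCubes (hw : Measurable w)
    (hfin : volume.withDensity w D.root ≠ ⊤) (t : ℝ≥0∞) :
    (D.root ∩ {x | t < w x} : Set (ESp n)) ≤ᵐ[volume]
      ⋃₀ D.denseCubes (volume.withDensity w) t := by
  filter_upwards [ae_tendsto_withDensity_cube_div hw hfin] with x hx hxt
  obtain ⟨j, hj⟩ := ((hx hxt.1).eventually (lt_mem_nhds hxt.2)).exists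
  refine ⟨D.cube j x, ⟨cube_mem_cubes j x, cube_subset_root hxt.1 j, ?_⟩, mem_cube_self j x⟩
  exact (ENNReal.lt_div_iff_mul_lt (.inl (isHalfOpenCube_cube j x).volume_ne_zero)
    (.inl (isHalfOpenCube_cube j x).volume_ne_top)).1 hj

lemma ae_sublevel_le_sUnion_sparseCubes (hw : Measurable w)
    (hfin : volume.withDensity w D.root ≠ ⊤) (t : ℝ≥0∞) :
    (D.root ∩ {x | w x < t} : Set (ESp n)) ≤ᵐ[volume]
      ⋃₀ D.sparseCubes (volume.withDensity w) t := by
  filter_upwards [ae_tendsto_withDensity_cube_div hw hfin] with x hx hxt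
  obtain ⟨j, hj⟩ := ((hx hxt.1).eventually (gt_mem_nhds hxt.2)).exists
  refine ⟨D.cube j x, ⟨cube_mem_cubes j x, cube_subset_root hxt.1 j, ?_⟩, mem_cube_self j x⟩
  exact (ENNReal.div_lt_iff (.inl (isHalfOpenCube_cube j x).volume_ne_zero)
    (.inl (isHalfOpenCube_cube j x).volume_ne_top)).1 hj

lemma measure_le_of_mem_maximalCubes_denseCubes {μ : Measure (ESp n)} {t : ℝ≥0∞}
    (hroot : μ D.root ≤ t * volume D.root) {R : Set (ESp n)}
    (hR : R ∈ maximalCubes (D.denseCubes μ t)) : μ R ≤ 2 ^ n * t * volume R := by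
  obtain ⟨j, x, rfl, hparent⟩ := exists_parent_of_mem_maximalCubes_stopping hR hroot.not_gt
  calc μ (D.cube (j + 1) x) ≤ μ (D.cube j x) := measure_mono (cube_succ_subset j x)
    _ ≤ t * volume (D.cube j x) := not_lt.1 hparent
    _ = 2 ^ n * t * volume (D.cube (j + 1) x) := by rw [volume_cube]; ring

end DyadicGrid

end Differentiation

section FujiiWilson

variable {n : ℕ}

/-- The dyadic maximal function of the measure `μ`, over the cubes of a grid. -/
def DyadicGrid.maximalFn (D : DyadicGrid n) (μ : Measure (ESp n)) (x : ESp n) : ℝ≥0∞ :=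
  ⨆ j, μ (D.cube j x) / volume (D.cube j x)

/-- The Fujii–Wilson `A_∞` condition with constant `K`, for dyadic maximal functions. -/
def DyadicFujiiWilson (μ : Measure (ESp n)) (K : ℝ≥0∞) : Prop :=
  ∀ D : DyadicGrid n, ∫⁻ x in D.root, D.maximalFn μ x ≤ K * μ D.root

/-- The half property, a quantitative form of absolute continuity: subsets of a cube that occupy at
most the proportion `α` of its volume carry at most half of its `μ`-measure. -/
def HalfProperty (μ : Measure (ESp n)) (α : ℝ≥0∞) : Prop :=
  ∀ ⦃Q : Set (ESp n)⦄, IsHalfOpenCube Q → ∀ ⦃E : Set (ESp n)⦄, MeasurableSet E → E ⊆ Q →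
    volume E ≤ α * volume Q → μ E ≤ 2⁻¹ * μ Q

lemma sum_two_pow_mul_le (s : Finset ℕ) {l M : ℝ≥0∞} (h : ∀ i ∈ s, 2 ^ i * l ≤ M) :
    ∑ i ∈ s, 2 ^ i * l ≤ 2 * M := by
  rcases s.eq_empty_or_nonempty with rfl | hs
  · simp
  have hgeom : ∑ i ∈ s, 2 ^ i ≤ 2 ^ (s.max' hs + 1) :=
    (Nat.geomSum_lt le_rfl fun i hi => Nat.lt_succ_of_le (s.le_max' i hi)).le
  calc ∑ i ∈ s, 2 ^ i * l = (∑ i ∈ s, 2 ^ i : ℕ) * l := by push_cast; rw [Finset.sum_mul]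
    _ ≤ (2 ^ (s.max' hs + 1) : ℕ) * l := by gcongr
    _ = 2 * (2 ^ s.max' hs * l) := by push_cast; ring
    _ ≤ 2 * M := by gcongr; exact h _ (s.max'_mem hs)

namespace DyadicGrid

variable {D : DyadicGrid n} {μ : Measure (ESp n)}

lemma le_maximalFn_of_mem_sUnion_denseCubes {t : ℝ≥0∞} {x : ESp n}
    (hx : x ∈ ⋃₀ D.denseCubes μ t) : t ≤ D.maximalFn μ x := by
  obtain ⟨R, ⟨hR, -, hdense⟩, hxR⟩ := hx
  obtain ⟨j, rfl⟩ := exists_eq_cube_of_mem hR hxR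
  refine le_iSup_of_le j ?_
  rw [ENNReal.le_div_iff_mul_le (.inl (isHalfOpenCube_cube j x).volume_ne_zero)
    (.inl (isHalfOpenCube_cube j x).volume_ne_top)]
  exact hdense.le

lemma sum_two_pow_mul_volume_sUnion_denseCubes_le (l : ℝ≥0∞) (N : ℕ) :
    ∑ i ∈ Finset.range N, 2 ^ i * l * volume (⋃₀ D.denseCubes μ (2 ^ i * l)) ≤
      2 * ∫⁻ x in D.root, D.maximalFn μ x := by
  classical
  set U : ℕ → Set (ESp n) := fun i => ⋃₀ D.denseCubes μ (2 ^ i * l)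
  have hUm (i) : MeasurableSet (U i) := measurableSet_sUnion stopping_subset_cubes
  have hUroot (i) : U i ⊆ D.root := sUnion_stopping_subset_root
  have hint (i) : 2 ^ i * l * volume (U i) =
      ∫⁻ x in D.root, (U i).indicator (fun _ => 2 ^ i * l) x := by
    rw [lintegral_indicator_const (hUm i), Measure.restrict_apply (hUm i),
      inter_eq_left.2 (hUroot i)]
  rw [Finset.sum_congr rfl fun i _ => hint i]
  rw [← lintegral_finsetSum _ fun i _ => measurable_const.indicator (hUm i),
    ← lintegral_const_mul' _ _ ENNReal.ofNat_ne_top]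
  refine lintegral_mono fun x => ?_
  simp_rw [indicator_apply, ← Finset.sum_filter]
  exact sum_two_pow_mul_le _ fun i hi =>
    le_maximalFn_of_mem_sUnion_denseCubes (Finset.mem_filter.1 hi).2

variable {w : ESp n → ℝ≥0∞}

lemma withDensity_superlevel_le (hw : Measurable w) {t : ℝ≥0∞} (ht : t ≠ ⊤)
    (hroot : volume.withDensity w D.root ≤ t * volume D.root) :
    volume.withDensity w (D.root ∩ {x | t < w x}) ≤
      2 ^ n * t * volume (⋃₀ D.denseCubes (volume.withDensity w) t) := by
  have hfin : volume.withDensity w D.root ≠ ⊤ :=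
    ne_top_of_le_ne_top (ENNReal.mul_ne_top ht isHalfOpenCube_root.volume_ne_top) hroot
  calc volume.withDensity w (D.root ∩ {x | t < w x})
      ≤ volume.withDensity w (⋃₀ D.denseCubes (volume.withDensity w) t) :=
        measure_mono_ae ((withDensity_absolutelyContinuous volume w).ae_le
          (ae_superlevel_le_sUnion_denseCubes hw hfin t))
    _ ≤ 2 ^ n * t * volume (⋃₀ D.denseCubes (volume.withDensity w) t) :=
        measure_sUnion_le_mul stopping_subset_cubes fun _ hR =>
          measure_le_of_mem_maximalCubes_denseCubes hroot hR

/-- Each of the `N` dyadic levels below the superlevel set contributes its full measure to the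
integral of the maximal function. -/
lemma natCast_mul_withDensity_superlevel_le (hw : Measurable w) {K l : ℝ≥0∞}
    (hFW : DyadicFujiiWilson (volume.withDensity w) K) (hl : l ≠ ⊤)
    (hroot : volume.withDensity w D.root = l * volume D.root) (N : ℕ) :
    N * volume.withDensity w (D.root ∩ {x | 2 ^ N * l < w x}) ≤
      2 ^ (n + 1) * K * volume.withDensity w D.root := by
  set μ := volume.withDensity w
  have hlevel : ∀ i ∈ Finset.range N, μ (D.root ∩ {x | 2 ^ N * l < w x}) ≤
      2 ^ n * (2 ^ i * l * volume (⋃₀ D.denseCubes μ (2 ^ i * l))) := by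
    intro i hi
    have hpow : (2 : ℝ≥0∞) ^ i * l ≤ 2 ^ N * l := by
      gcongr
      exacts [one_le_two, (Finset.mem_range.1 hi).le]
    rw [← mul_assoc]
    refine (measure_mono <| inter_subset_inter_right _ fun x hx => hpow.trans_lt hx).trans
      (withDensity_superlevel_le hw (by finiteness) ?_)
    rw [hroot, mul_assoc]
    exact le_mul_of_one_le_left zero_le (one_le_pow₀ one_le_two)
  calc N * μ (D.root ∩ {x | 2 ^ N * l < w x})
      = ∑ _i ∈ Finset.range N, μ (D.root ∩ {x | 2 ^ N * l < w x}) := by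
        rw [Finset.sum_const, Finset.card_range, nsmul_eq_mul]
    _ ≤ 2 ^ n * ∑ i ∈ Finset.range N, 2 ^ i * l * volume (⋃₀ D.denseCubes μ (2 ^ i * l)) := by
        rw [Finset.mul_sum]; exact Finset.sum_le_sum hlevel
    _ ≤ 2 ^ n * (2 * (K * μ D.root)) := by
        gcongr
        exact (sum_two_pow_mul_volume_sUnion_denseCubes_le l N).trans (by gcongr; exact hFW D)
    _ = 2 ^ (n + 1) * K * μ D.root := by ring

end DyadicGrid

lemma withDensity_le_mul_add_superlevel {X : Type*} [MeasurableSpace X] {μ : Measure X}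
    {w : X → ℝ≥0∞} (hw : Measurable w) {E : Set X} (hE : MeasurableSet E) (t : ℝ≥0∞) :
    μ.withDensity w E ≤ t * μ E + μ.withDensity w (E ∩ {x | t < w x}) := by
  have hlt : MeasurableSet {x | t < w x} := measurableSet_lt measurable_const hw
  rw [← measure_sdiff_add_inter E hlt]
  gcongr
  rw [withDensity_apply _ (hE.diff hlt)]
  calc ∫⁻ x in E \ {x | t < w x}, w x ∂μ ≤ ∫⁻ _ in E \ {x | t < w x}, t ∂μ :=
        setLIntegral_mono' (hE.diff hlt) fun x hx => not_lt.1 hx.2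
    _ = t * μ (E \ {x | t < w x}) := setLIntegral_const _ _
    _ ≤ t * μ E := by gcongr; exact sdiff_subset

lemma DyadicFujiiWilson.halfProperty {w : ESp n → ℝ≥0∞} (hw : Measurable w)
    (hfin : ∀ Q, IsHalfOpenCube Q → volume.withDensity w Q ≠ ⊤) {K : ℝ≥0∞}
    (hFW : DyadicFujiiWilson (volume.withDensity w) K) {N : ℕ} (hN : N ≠ 0)
    (hKN : 2 ^ (n + 3) * K ≤ N) :
    HalfProperty (volume.withDensity w) (4 * 2 ^ N)⁻¹ := by
  intro Q hQ E hE hEQ hEsmall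
  obtain ⟨D, rfl⟩ := hQ.exists_root_eq
  set μ := volume.withDensity w
  set l := μ D.root / volume D.root
  have hl : l ≠ ⊤ := (ENNReal.div_lt_top (hfin _ hQ) hQ.volume_ne_zero).ne
  have hroot : μ D.root = l * volume D.root :=
    (ENNReal.div_mul_cancel hQ.volume_ne_zero hQ.volume_ne_top).symm
  have hquarter : (4 : ℝ≥0∞)⁻¹ + 4⁻¹ = 2⁻¹ := by
    rw [show (4 : ℝ≥0∞) = 2 * 2 by norm_num, ENNReal.mul_inv (by simp) (by simp), ← mul_add,
      ENNReal.inv_two_add_inv_two, mul_one]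
  have hlow : 2 ^ N * l * volume E ≤ 4⁻¹ * μ D.root :=
    calc 2 ^ N * l * volume E ≤ 2 ^ N * l * ((4 * 2 ^ N)⁻¹ * volume D.root) := by gcongr
      _ = 2 ^ N * (2 ^ N)⁻¹ * 4⁻¹ * (l * volume D.root) := by
        rw [ENNReal.mul_inv (by simp) (by simp)]; ring
      _ = 4⁻¹ * μ D.root := by
        rw [ENNReal.mul_inv_cancel (by positivity) (by finiteness), one_mul, hroot]
  have hhigh : μ (D.root ∩ {x | 2 ^ N * l < w x}) ≤ 4⁻¹ * μ D.root := by
    rw [← ENNReal.div_eq_inv_mul, ENNReal.le_div_iff_mul_le (by simp) (by simp),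
      ← ENNReal.mul_le_mul_iff_right (Nat.cast_ne_zero.2 hN) (ENNReal.natCast_ne_top N)]
    calc N * (μ (D.root ∩ {x | 2 ^ N * l < w x}) * 4)
        = 4 * (N * μ (D.root ∩ {x | 2 ^ N * l < w x})) := by ring
      _ ≤ 4 * (2 ^ (n + 1) * K * μ D.root) := by
        gcongr 4 * ?_
        exact DyadicGrid.natCast_mul_withDensity_superlevel_le hw hFW hl hroot N
      _ = 2 ^ (n + 3) * K * μ D.root := by ring
      _ ≤ N * μ D.root := by gcongr
  calc μ E ≤ 2 ^ N * l * volume E + μ (E ∩ {x | 2 ^ N * l < w x}) :=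
        withDensity_le_mul_add_superlevel hw hE _
    _ ≤ 4⁻¹ * μ D.root + 4⁻¹ * μ D.root := by
        gcongr
        exact (measure_mono (inter_subset_inter_left _ hEQ)).trans hhigh
    _ = 2⁻¹ * μ D.root := by rw [← add_mul, hquarter]

end FujiiWilson

section Decay

variable {n : ℕ}

/-- Iterated form of the half property: subsets that occupy at most the proportion `a⁻ᵐ` of the
volume of a cube carry at most the proportion `2⁻ᵐ` of its `μ`-measure. -/
def GeometricDecay (μ : Measure (ESp n)) (a : ℝ≥0∞) : Prop :=
  ∀ (m : ℕ) ⦃Q : Set (ESp n)⦄, IsHalfOpenCube Q → ∀ ⦃E : Set (ESp n)⦄, MeasurableSet E → E ⊆ Q →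
    volume E ≤ a⁻¹ ^ m * volume Q → μ E ≤ 2⁻¹ ^ m * μ Q

/-- The set where the weight `v` is at most `a⁻ᵐ` times its mean over a cube occupies at most the
proportion `2⁻ᵐ` of the `μ`-measure of the cube. -/
def SublevelDecay (μ : Measure (ESp n)) (v : ESp n → ℝ≥0∞) (a : ℝ≥0∞) : Prop :=
  ∀ (m : ℕ) ⦃Q : Set (ESp n)⦄, IsHalfOpenCube Q →
    μ (Q ∩ {x | v x * volume Q ≤ a⁻¹ ^ m * volume.withDensity v Q}) ≤ 2⁻¹ ^ m * μ Q

/-- The measure of a dyadic cube is at most `C` times that of each of its children. -/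
def DyadicDoubling (μ : Measure (ESp n)) (C : ℝ≥0∞) : Prop :=
  ∀ (D : DyadicGrid n) (j : ℕ) (x : ESp n), μ (D.cube j x) ≤ C * μ (D.cube (j + 1) x)

namespace DyadicGrid

variable {D : DyadicGrid n} {μ : Measure (ESp n)} {t : ℝ≥0∞}

lemma volume_sUnion_denseCubes_le (ht : t ≠ 0) : volume (⋃₀ D.denseCubes μ t) ≤ t⁻¹ * μ univ := by
  refine (measure_sUnion_le_mul (ν := μ) (a := t⁻¹) stopping_subset_cubes fun P hP => ?_).trans
    (by gcongr; exact subset_univ _)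
  have hdense : t * volume P < μ P := hP.prop.2.2
  have ht' : t ≠ ⊤ := by
    rintro rfl
    rw [ENNReal.top_mul (isHalfOpenCube_of_mem_cubes hP.prop.1).volume_ne_zero] at hdense
    exact not_top_lt hdense
  rw [← ENNReal.div_eq_inv_mul, ENNReal.le_div_iff_mul_le (.inl ht) (.inl ht'), mul_comm]
  exact hdense.le

lemma ae_le_sUnion_denseCubes_restrict {E : Set (ESp n)} (hE : MeasurableSet E)
    (hEroot : E ⊆ D.root) (ht : t < 1) :
    E ≤ᵐ[volume] ⋃₀ D.denseCubes (volume.restrict E) t := by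
  have hsuper := ae_superlevel_le_sUnion_denseCubes (D := D) (w := E.indicator 1)
    (measurable_one.indicator hE) (by
      rw [withDensity_indicator_one hE]
      exact ne_top_of_le_ne_top isHalfOpenCube_root.volume_ne_top (Measure.restrict_apply_le E _)) t
  rw [withDensity_indicator_one hE] at hsuper
  filter_upwards [hsuper] with x hx hxE
  exact hx ⟨hEroot hxE, by simpa [indicator_of_mem hxE] using ht⟩

end DyadicGrid

namespace HalfProperty

variable {μ : Measure (ESp n)} {α : ℝ≥0∞}

lemma measure_inter_sUnion_denseCubes_le (hμ : HalfProperty μ α) {D : DyadicGrid n}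
    {E : Set (ESp n)} (hE : MeasurableSet E) {t : ℝ≥0∞} (ht : 2 ^ n * t ≤ α)
    (hroot : volume.restrict E D.root ≤ t * volume D.root) :
    μ (E ∩ ⋃₀ D.denseCubes (volume.restrict E) t) ≤
      2⁻¹ * μ (⋃₀ D.denseCubes (volume.restrict E) t) := by
  refine DyadicGrid.measure_inter_sUnion_le_mul DyadicGrid.stopping_subset_cubes E fun P hP => ?_
  have hPcube := DyadicGrid.isHalfOpenCube_of_mem_cubes hP.prop.1
  refine hμ hPcube (hE.inter hPcube.measurableSet) inter_subset_right ?_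
  rw [inter_comm, ← Measure.restrict_apply hPcube.measurableSet]
  refine (DyadicGrid.measure_le_of_mem_maximalCubes_denseCubes hroot hP).trans ?_
  gcongr

/-- The half property applies on the maximal dyadic cubes in which `E` has density more than `a⁻¹`,
and these cubes together occupy at most the proportion `a ^ (-m)` of the volume of `Q`. -/
lemma geometricDecay (hμ : HalfProperty μ α) (hac : μ ≪ volume) {a : ℝ≥0∞} (ha : 1 < a)
    (ha' : a ≠ ⊤) (haα : 2 ^ n * a⁻¹ ≤ α) : GeometricDecay μ a := by
  intro m Q hQ
  obtain ⟨D, rfl⟩ := hQ.exists_root_eq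
  induction m with
  | zero => intro E _ hEQ _; simpa using measure_mono hEQ
  | succ m ih =>
    intro E hE hEQ hEsmall
    have ha0 : a⁻¹ ≠ 0 := ENNReal.inv_ne_zero.2 ha'
    have ha1 : a⁻¹ < 1 := ENNReal.inv_lt_one.2 ha
    set S := D.denseCubes (volume.restrict E) a⁻¹
    have hroot : volume.restrict E D.root ≤ a⁻¹ * volume D.root := by
      calc volume.restrict E D.root ≤ volume E := by
            rw [← Measure.restrict_apply_univ E]; exact measure_mono (subset_univ _)
        _ ≤ a⁻¹ ^ (m + 1) * volume D.root := hEsmall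
        _ ≤ a⁻¹ * volume D.root := by
            gcongr
            exact pow_le_of_le_one zero_le ha1.le m.succ_ne_zero
    have hvol : volume (⋃₀ S) ≤ a⁻¹ ^ m * volume D.root := by
      refine (DyadicGrid.volume_sUnion_denseCubes_le ha0).trans ?_
      rw [Measure.restrict_apply_univ]
      calc a⁻¹⁻¹ * volume E ≤ a⁻¹⁻¹ * (a⁻¹ ^ (m + 1) * volume D.root) := by gcongr
        _ = a⁻¹⁻¹ * a⁻¹ * (a⁻¹ ^ m * volume D.root) := by ring
        _ = a⁻¹ ^ m * volume D.root := by
          rw [ENNReal.inv_mul_cancel ha0 (ha1.trans_le le_top).ne, one_mul]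
    have hcover : E ≤ᵐ[volume] (E ∩ ⋃₀ S : Set (ESp n)) := by
      filter_upwards [DyadicGrid.ae_le_sUnion_denseCubes_restrict hE hEQ ha1] with x hx hxE
      exact ⟨hxE, hx hxE⟩
    calc μ E ≤ μ (E ∩ ⋃₀ S) := measure_mono_ae (hac.ae_le hcover)
      _ ≤ 2⁻¹ * μ (⋃₀ S) := hμ.measure_inter_sUnion_denseCubes_le hE haα hroot
      _ ≤ 2⁻¹ * (2⁻¹ ^ m * μ D.root) := by
        gcongr
        exact ih (DyadicGrid.measurableSet_sUnion DyadicGrid.stopping_subset_cubes)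
          DyadicGrid.sUnion_stopping_subset_root hvol
      _ = 2⁻¹ ^ (m + 1) * μ D.root := by ring

end HalfProperty

end Decay

section Doubling

variable {n : ℕ}

lemma halfOpenCube_subset_halfOpenCube_iff {c c' : Fin n → ℝ} {h h' : ℝ} (hh : 0 < h) :
    halfOpenCube c h ⊆ halfOpenCube c' h' ↔ ∀ i, c' i ≤ c i ∧ c i + h ≤ c' i + h' := by
  have hne (i) : c i < c i + h := lt_add_of_pos_right _ hh
  rw [halfOpenCube_eq_preimage, halfOpenCube_eq_preimage,
    (WithLp.ofLp_surjective 2).preimage_subset_preimage_iff, univ_pi_subset_univ_pi_iff,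
    or_iff_left fun ⟨i, hi⟩ => (nonempty_Ico.2 (hne i)).ne_empty hi]
  exact forall_congr' fun i => Ico_subset_Ico_iff (hne i)

lemma ofReal_pow_le_add_of_mul_le {H h δ : ℝ} (hδ0 : 0 ≤ δ) (hδ1 : δ ≤ 1) (hH : 0 ≤ H)
    (hle : (1 - δ) * H ≤ h) (m : ℕ) :
    ENNReal.ofReal H ^ m ≤
      ENNReal.ofReal h ^ m + ENNReal.ofReal (m * δ) * ENNReal.ofReal H ^ m := by
  have hδ : 0 ≤ 1 - δ := sub_nonneg.2 hδ1
  have hh : 0 ≤ h := (mul_nonneg hδ hH).trans hle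
  have hbernoulli : 1 - m * δ ≤ (1 - δ) ^ m := by
    simpa [sub_eq_add_neg] using one_add_mul_le_pow (a := -δ) (by linarith) m
  have hreal : H ^ m ≤ h ^ m + m * δ * H ^ m :=
    calc H ^ m = (1 - m * δ) * H ^ m + m * δ * H ^ m := by ring
      _ ≤ (1 - δ) ^ m * H ^ m + m * δ * H ^ m := by gcongr
      _ ≤ h ^ m + m * δ * H ^ m := by rw [← mul_pow]; gcongr
  rw [← ENNReal.ofReal_pow hH, ← ENNReal.ofReal_pow hh, ← ENNReal.ofReal_mul (by positivity),
    ← ENNReal.ofReal_add (by positivity) (by positivity)]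
  exact ENNReal.ofReal_le_ofReal hreal

namespace HalfProperty

variable {μ : Measure (ESp n)} {α : ℝ≥0∞}

lemma measure_le_two_mul (hμ : HalfProperty μ α) {Q Q' : Set (ESp n)} (hQ : IsHalfOpenCube Q)
    (hQ' : IsHalfOpenCube Q') (hfin : μ Q' ≠ ⊤) (hsub : Q ⊆ Q')
    (hvol : volume Q' ≤ volume Q + α * volume Q') : μ Q' ≤ 2 * μ Q := by
  have hdiff : μ (Q' \ Q) ≤ 2⁻¹ * μ Q' := by
    refine hμ hQ' (hQ'.measurableSet.diff hQ.measurableSet) sdiff_subset ?_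
    rw [measure_sdiff hsub hQ.measurableSet.nullMeasurableSet hQ.volume_ne_top]
    exact tsub_le_iff_left.2 hvol
  have habsorb : 2⁻¹ * μ Q' + 2⁻¹ * μ Q' ≤ μ Q + 2⁻¹ * μ Q' :=
    calc 2⁻¹ * μ Q' + 2⁻¹ * μ Q' = μ Q' := by
          rw [← add_mul, ENNReal.inv_two_add_inv_two, one_mul]
      _ = μ Q + μ (Q' \ Q) := by
          rw [measure_add_sdiff hQ.measurableSet.nullMeasurableSet,
            union_eq_self_of_subset_left hsub]
      _ ≤ μ Q + 2⁻¹ * μ Q' := by gcongr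
  rw [ENNReal.add_le_add_iff_right (by finiteness), ← ENNReal.div_eq_inv_mul] at habsorb
  rwa [mul_comm, ← ENNReal.div_le_iff_le_mul (by simp) (by simp)]

/-- Interpolate between the cubes by a chain of `N` nested cubes, each of which
fills most of the next one. -/
lemma measure_le_two_pow_mul (hμ : HalfProperty μ α) (hfin : ∀ Q, IsHalfOpenCube Q → μ Q ≠ ⊤)
    {N : ℕ} (hN : N ≠ 0) (hα : ENNReal.ofReal (n / N) ≤ α) {p q : Fin n → ℝ} {h : ℝ} (hh : 0 < h)
    (hsub : halfOpenCube q h ⊆ halfOpenCube p (2 * h)) :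
    μ (halfOpenCube p (2 * h)) ≤ 2 ^ N * μ (halfOpenCube q h) := by
  have hpq := (halfOpenCube_subset_halfOpenCube_iff hh).1 hsub
  have hNpos : (0 : ℝ) < N := by positivity
  set δ : ℝ := 1 / N
  have hδ : 0 < δ := by positivity
  have hδ1 : δ ≤ 1 := (div_le_one hNpos).2 (by exact_mod_cast Nat.one_le_iff_ne_zero.2 hN)
  have hNδ : N * δ = 1 := mul_one_div_cancel hNpos.ne'
  let P : ℕ → Set (ESp n) := fun k =>
    halfOpenCube (fun i => q i - k * δ * (q i - p i)) (h * (1 + k * δ))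
  have hP (k) : IsHalfOpenCube (P k) := ⟨_, _, by positivity, rfl⟩
  have hstep (k) : μ (P (k + 1)) ≤ 2 * μ (P k) := by
    refine hμ.measure_le_two_mul (hP k) (hP _) (hfin _ (hP _)) ?_ ?_
    · refine (halfOpenCube_subset_halfOpenCube_iff (by positivity)).2 fun i => ?_
      push_cast
      constructor <;> nlinarith [hpq i]
    · have hside : (1 - δ) * (h * (1 + (k + 1 : ℕ) * δ)) ≤ h * (1 + k * δ) := by
        rw [mul_left_comm]
        gcongr
        push_cast
        nlinarith [mul_nonneg (Nat.cast_nonneg (α := ℝ) k) (mul_nonneg hδ.le hδ.le)]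
      simp only [P, volume_halfOpenCube]
      refine (ofReal_pow_le_add_of_mul_le hδ.le hδ1 (by positivity) hside n).trans ?_
      gcongr
      rwa [mul_one_div]
  have hchain (k) : μ (P k) ≤ 2 ^ k * μ (P 0) := by
    induction k with
    | zero => simp
    | succ k ih => rw [pow_succ', mul_assoc]; exact (hstep k).trans (by gcongr)
  have hP0 : P 0 = halfOpenCube q h := by simp [P]
  have hPN : P N = halfOpenCube p (2 * h) := by
    simp only [P, hNδ]
    congr 1
    · ext i; ring
    · ring
  rw [← hP0, ← hPN]
  exact hchain N

lemma dyadicDoubling (hμ : HalfProperty μ α) (hfin : ∀ Q, IsHalfOpenCube Q → μ Q ≠ ⊤)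
    {N : ℕ} (hN : N ≠ 0) (hα : ENNReal.ofReal (n / N) ≤ α) : DyadicDoubling μ (2 ^ N) := by
  intro D j x
  have hs := DyadicGrid.cube_succ_subset (D := D) j x
  have hside : D.side / 2 ^ j = 2 * (D.side / 2 ^ (j + 1)) := by rw [pow_succ]; field_simp
  rw [DyadicGrid.cube_eq_halfOpenCube, DyadicGrid.cube_eq_halfOpenCube, hside] at hs ⊢
  exact hμ.measure_le_two_pow_mul hfin hN hα (div_pos D.side_pos (by positivity)) hs

end HalfProperty

end Doubling

section Sublevel

variable {n : ℕ}

namespace DyadicGrid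

variable {D : DyadicGrid n} {μ : Measure (ESp n)} {α C t : ℝ≥0∞}

lemma measure_sUnion_sparseCubes_le :
    μ (⋃₀ D.sparseCubes μ t) ≤ t * volume (⋃₀ D.sparseCubes μ t) :=
  measure_sUnion_le_mul stopping_subset_cubes fun _ hP => hP.prop.2.2.le

/-- The sparse cubes carry at most a quarter of the measure of the root, so their complement carries
more than half of it. -/
lemma volume_sUnion_sparseCubes_le (hμ : HalfProperty μ α) (hpos : μ D.root ≠ 0)
    (hfin : μ D.root ≠ ⊤) (ht : t * volume D.root ≤ 4⁻¹ * μ D.root) :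
    volume (⋃₀ D.sparseCubes μ t) ≤ (1 - α) * volume D.root := by
  set U := ⋃₀ D.sparseCubes μ t
  have hU : MeasurableSet U := measurableSet_sUnion stopping_subset_cubes
  have hUroot : U ⊆ D.root := sUnion_stopping_subset_root
  have hQ := isHalfOpenCube_root (D := D)
  have hsplit (ν : Measure (ESp n)) : ν D.root = ν U + ν (D.root \ U) := by
    rw [measure_add_sdiff hU.nullMeasurableSet, union_eq_self_of_subset_left hUroot]
  have hlarge : α * volume D.root ≤ volume (D.root \ U) := by
    by_contra! hsmall
    have hhalf := hμ hQ (hQ.measurableSet.diff hU) sdiff_subset hsmall.le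
    have hquarter : μ U ≤ 4⁻¹ * μ D.root := by
      refine measure_sUnion_sparseCubes_le.trans (le_trans ?_ ht)
      gcongr
    have hlt : (4⁻¹ + 2⁻¹ : ℝ≥0∞) < 1 := by
      rw [← ENNReal.inv_two_add_inv_two]
      exact ENNReal.add_lt_add_right (by simp) (ENNReal.inv_lt_inv.2 (by norm_num))
    refine lt_irrefl (μ D.root) ?_
    calc μ D.root = μ U + μ (D.root \ U) := hsplit μ
      _ ≤ (4⁻¹ + 2⁻¹) * μ D.root := by rw [add_mul]; gcongr
      _ < 1 * μ D.root := (ENNReal.mul_lt_mul_iff_left hpos hfin).2 hlt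
      _ = μ D.root := one_mul _
  have hαfin : α * volume D.root ≠ ⊤ :=
    ne_top_of_le_ne_top hQ.volume_ne_top (hlarge.trans (measure_mono sdiff_subset))
  rw [ENNReal.sub_mul fun _ _ => hQ.volume_ne_top, one_mul]
  refine ENNReal.le_sub_of_add_le_left hαfin ?_
  calc α * volume D.root + volume U ≤ volume (D.root \ U) + volume U := by gcongr
    _ = volume D.root := by rw [add_comm, ← hsplit]

lemma avg_le_of_mem_maximalCubes_sparseCubes (hμ : DyadicDoubling μ C)
    (hroot : t * volume D.root ≤ μ D.root) {R : Set (ESp n)}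
    (hR : R ∈ maximalCubes (D.sparseCubes μ t)) : t * volume R ≤ C * μ R := by
  obtain ⟨j, x, rfl, hparent⟩ := exists_parent_of_mem_maximalCubes_stopping hR hroot.not_gt
  calc t * volume (D.cube (j + 1) x) ≤ t * volume (D.cube j x) := by
        gcongr; exact cube_succ_subset j x
    _ ≤ μ (D.cube j x) := not_lt.1 hparent
    _ ≤ C * μ (D.cube (j + 1) x) := hμ D j x

end DyadicGrid

variable {v : ESp n → ℝ≥0∞} {α C : ℝ≥0∞}

lemma inv_eight_mul_lt (hC : 1 ≤ C) : (8 * C)⁻¹ < 4⁻¹ :=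
  ENNReal.inv_lt_inv.2 <| calc
    (4 : ℝ≥0∞) < 8 * 1 := by norm_num
    _ ≤ 8 * C := by gcongr

lemma mul_volume_le_of_mem_maximalCubes_sparseCubes {D : DyadicGrid n} {μ : Measure (ESp n)}
    (hμ : DyadicDoubling μ C) {m : ℕ} {y : ℝ≥0∞}
    (hy : y * volume D.root ≤ (8 * C)⁻¹ ^ (m + 1) * μ D.root) {P : Set (ESp n)}
    (hP : P ∈ maximalCubes (D.sparseCubes μ (4⁻¹ * μ D.root / volume D.root))) :
    y * volume P ≤ (8 * C)⁻¹ ^ m * μ P := by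
  have hQ := DyadicGrid.isHalfOpenCube_root (D := D)
  set γ : ℝ≥0∞ := (8 * C)⁻¹
  set t := 4⁻¹ * μ D.root / volume D.root
  have ht : t * volume D.root = 4⁻¹ * μ D.root :=
    ENNReal.div_mul_cancel hQ.volume_ne_zero hQ.volume_ne_top
  have hroot : μ D.root = 4 * t * volume D.root := by
    rw [mul_assoc, ht, ← mul_assoc, ENNReal.mul_inv_cancel (by simp) (by simp), one_mul]
  have hyt : y ≤ γ ^ (m + 1) * (4 * t) := by
    rwa [hroot, ← mul_assoc, ENNReal.mul_le_mul_iff_left hQ.volume_ne_zero hQ.volume_ne_top] at hy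
  have htP : t * volume P ≤ C * μ P :=
    DyadicGrid.avg_le_of_mem_maximalCubes_sparseCubes hμ
      (ht.trans_le (mul_le_of_le_one_left zero_le (by simp))) hP
  have hγC : γ * (4 * C) ≤ 1 :=
    calc γ * (4 * C) ≤ γ * (8 * C) := by gcongr; norm_num
      _ ≤ 1 := ENNReal.inv_mul_le_one _
  calc y * volume P ≤ γ ^ (m + 1) * (4 * t) * volume P := by gcongr
    _ = γ ^ m * γ * 4 * (t * volume P) := by ring
    _ ≤ γ ^ m * γ * 4 * (C * μ P) := by gcongr
    _ = γ ^ m * (γ * (4 * C) * μ P) := by ring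
    _ ≤ γ ^ m * μ P := by gcongr; exact mul_le_of_le_one_left zero_le hγC

lemma HalfProperty.volume_sublevel_le (hhalf : HalfProperty (volume.withDensity v) α)
    (hv : Measurable v) (hpos : ∀ Q, IsHalfOpenCube Q → volume.withDensity v Q ≠ 0)
    (hfin : ∀ Q, IsHalfOpenCube Q → volume.withDensity v Q ≠ ⊤)
    (hdouble : DyadicDoubling (volume.withDensity v) C) (hC : 1 ≤ C) (m : ℕ) {Q : Set (ESp n)}
    (hQ : IsHalfOpenCube Q) :
    volume (Q ∩ {x | v x * volume Q ≤ (8 * C)⁻¹ ^ m * volume.withDensity v Q}) ≤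
      (1 - α) ^ m * volume Q := by
  set μ := volume.withDensity v
  set γ : ℝ≥0∞ := (8 * C)⁻¹
  induction m generalizing Q with
  | zero => simpa using measure_mono inter_subset_left
  | succ m ih =>
    obtain ⟨D, rfl⟩ := hQ.exists_root_eq
    set F := D.root ∩ {x | v x * volume D.root ≤ γ ^ (m + 1) * μ D.root}
    set t := 4⁻¹ * μ D.root / volume D.root
    set S := D.sparseCubes μ t
    have hS : S ⊆ D.cubes := DyadicGrid.stopping_subset_cubes
    have hγ : γ ^ (m + 1) < 4⁻¹ :=
      (pow_le_of_le_one zero_le ((inv_eight_mul_lt hC).le.trans (by simp)) m.succ_ne_zero).trans_lt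
        (inv_eight_mul_lt hC)
    have hcover : F ≤ᵐ[volume] (F ∩ ⋃₀ S : Set (ESp n)) := by
      filter_upwards [DyadicGrid.ae_sublevel_le_sUnion_sparseCubes hv (hfin _ hQ) t] with x hx hxF
      refine ⟨hxF, hx ⟨hxF.1, ?_⟩⟩
      refine (ENNReal.lt_div_iff_mul_lt (.inl hQ.volume_ne_zero) (.inl hQ.volume_ne_top)).2 ?_
      exact hxF.2.trans_lt ((ENNReal.mul_lt_mul_iff_left (hpos _ hQ) (hfin _ hQ)).2 hγ)
    have hmax : volume (F ∩ ⋃₀ S) ≤ (1 - α) ^ m * volume (⋃₀ S) := by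
      refine DyadicGrid.measure_inter_sUnion_le_mul hS F fun P hP => ?_
      refine (measure_mono ?_).trans (ih (DyadicGrid.isHalfOpenCube_of_mem_cubes hP.prop.1))
      exact fun x hx => ⟨hx.2, mul_volume_le_of_mem_maximalCubes_sparseCubes hdouble hx.1.2 hP⟩
    calc volume F ≤ volume (F ∩ ⋃₀ S) := measure_mono_ae hcover
      _ ≤ (1 - α) ^ m * volume (⋃₀ S) := hmax
      _ ≤ (1 - α) ^ m * ((1 - α) * volume D.root) := by
        gcongr
        exact DyadicGrid.volume_sUnion_sparseCubes_le hhalf (hpos _ hQ) (hfin _ hQ)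
          (ENNReal.div_mul_cancel hQ.volume_ne_zero hQ.volume_ne_top).le
      _ = (1 - α) ^ (m + 1) * volume D.root := by ring

lemma GeometricDecay.sublevelDecay {μ : Measure (ESp n)} {a b : ℝ≥0∞} {r : ℕ}
    (hμ : GeometricDecay μ b) (hv : Measurable v)
    (hpos : ∀ Q, IsHalfOpenCube Q → volume.withDensity v Q ≠ 0)
    (hfin : ∀ Q, IsHalfOpenCube Q → volume.withDensity v Q ≠ ⊤)
    (hhalf : HalfProperty (volume.withDensity v) α)
    (hdouble : DyadicDoubling (volume.withDensity v) C) (hC : 1 ≤ C)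
    (hr : (1 - α) ^ r ≤ b⁻¹) (ha : (8 * C) ^ r ≤ a) : SublevelDecay μ v a := by
  intro m Q hQ
  have ha' : a⁻¹ ≤ (8 * C)⁻¹ ^ r := by rw [← ENNReal.inv_pow]; exact ENNReal.inv_le_inv.2 ha
  refine hμ m hQ (hQ.measurableSet.inter (measurableSet_le (by fun_prop) measurable_const))
    inter_subset_left ?_
  calc volume (Q ∩ {x | v x * volume Q ≤ a⁻¹ ^ m * volume.withDensity v Q})
      ≤ volume (Q ∩ {x | v x * volume Q ≤ (8 * C)⁻¹ ^ (r * m) * volume.withDensity v Q}) := by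
        refine measure_mono (inter_subset_inter_right _ fun x hx => ?_)
        rw [mem_ofPred_eq] at hx ⊢
        exact hx.trans (by rw [pow_mul]; gcongr)
    _ ≤ (1 - α) ^ (r * m) * volume Q := hhalf.volume_sublevel_le hv hpos hfin hdouble hC _ hQ
    _ ≤ b⁻¹ ^ m * volume Q := by rw [pow_mul]; gcongr

end Sublevel

section DecayRatio

variable {n : ℕ}

/-- An extended-nonnegative weight: a measurable density whose integral over each half-open cube is
positive and finite. -/
structure IsCubeWeight (w : ESp n → ℝ≥0∞) : Prop where
  measurable : Measurable w
  withDensity_ne_zero : ∀ Q, IsHalfOpenCube Q → volume.withDensity w Q ≠ 0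
  withDensity_ne_top : ∀ Q, IsHalfOpenCube Q → volume.withDensity w Q ≠ ⊤

lemma two_pow_mul_inv_le {α b : ℝ≥0∞} (hb : 2 ^ n * α⁻¹ ≤ b) : 2 ^ n * b⁻¹ ≤ α :=
  calc 2 ^ n * b⁻¹ ≤ 2 ^ n * (2 ^ n * α⁻¹)⁻¹ := by gcongr
    _ = 2 ^ n * (2 ^ n)⁻¹ * α := by
      rw [ENNReal.mul_inv (.inl (by positivity)) (.inl (by finiteness)), inv_inv, mul_assoc]
    _ = α := by rw [ENNReal.mul_inv_cancel (by positivity) (by finiteness), one_mul]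

lemma exists_one_sub_pow_le {α ε : ℝ≥0∞} (hα : α ≠ 0) (hε : ε ≠ 0) : ∃ r : ℕ, (1 - α) ^ r ≤ ε :=
  have hlt : 1 - α < 1 := ENNReal.sub_lt_self one_ne_top one_ne_zero hα
  ((ENNReal.tendsto_pow_atTop_nhds_zero_of_lt_one hlt).eventually_le_const
    (pos_iff_ne_zero.2 hε)).exists

lemma exists_ofReal_div_natCast_le (n : ℕ) {α : ℝ≥0∞} (hα : α ≠ 0) :
    ∃ N : ℕ, N ≠ 0 ∧ ENNReal.ofReal (n / N) ≤ α := by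
  have hlim := ENNReal.tendsto_ofReal (tendsto_const_div_atTop_nhds_zero_nat (n : ℝ))
  rw [ENNReal.ofReal_zero] at hlim
  exact ((Filter.eventually_ne_atTop 0).and
    (hlim.eventually_le_const (pos_iff_ne_zero.2 hα))).exists

lemma exists_decay_ratio_of_halfProperty (n : ℕ) {α : ℝ≥0∞} (hα : α ≠ 0) :
    ∃ a, 1 < a ∧ a ≠ ⊤ ∧ ∀ u v : ESp n → ℝ≥0∞, IsCubeWeight v →
      HalfProperty (volume.withDensity u) α → HalfProperty (volume.withDensity v) α →
      GeometricDecay (volume.withDensity u) a ∧ GeometricDecay (volume.withDensity v) a ∧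
        SublevelDecay (volume.withDensity u) v a := by
  set b : ℝ≥0∞ := max 2 (2 ^ n * α⁻¹)
  have hb : 1 < b := ENNReal.one_lt_two.trans_le (le_max_left _ _)
  have hb' : b ≠ ⊤ := by finiteness
  obtain ⟨r, hr⟩ := exists_one_sub_pow_le hα (ENNReal.inv_ne_zero.2 hb')
  obtain ⟨N, hN, hNα⟩ := exists_ofReal_div_natCast_le n hα
  set a := max b ((8 * 2 ^ N) ^ r)
  have ha : 1 < a := hb.trans_le (le_max_left _ _)
  have ha' : a ≠ ⊤ := by finiteness
  have haα : 2 ^ n * a⁻¹ ≤ α := two_pow_mul_inv_le ((le_max_right _ _).trans (le_max_left _ _))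
  refine ⟨a, ha, ha', fun u v hv hu_half hv_half => ⟨?_, ?_, ?_⟩⟩
  · exact hu_half.geometricDecay (withDensity_absolutelyContinuous _ _) ha ha' haα
  · exact hv_half.geometricDecay (withDensity_absolutelyContinuous _ _) ha ha' haα
  · have hu_decay : GeometricDecay (volume.withDensity u) b :=
      hu_half.geometricDecay (withDensity_absolutelyContinuous _ _) hb hb'
        (two_pow_mul_inv_le (le_max_right _ _))
    exact hu_decay.sublevelDecay hv.measurable hv.withDensity_ne_zero hv.withDensity_ne_top hv_half
      (hv_half.dyadicDoubling hv.withDensity_ne_top hN hNα) (one_le_pow₀ one_le_two) hr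
      (le_max_right _ _)

lemma exists_decay_ratio_of_dyadicFujiiWilson (n : ℕ) {Ku Kv : ℝ≥0∞} (hKu : Ku ≠ ⊤) (hKv : Kv ≠ ⊤) :
    ∃ a, 1 < a ∧ a ≠ ⊤ ∧ ∀ u v : ESp n → ℝ≥0∞, IsCubeWeight u → IsCubeWeight v →
      DyadicFujiiWilson (volume.withDensity u) Ku → DyadicFujiiWilson (volume.withDensity v) Kv →
      GeometricDecay (volume.withDensity u) a ∧ GeometricDecay (volume.withDensity v) a ∧
        SublevelDecay (volume.withDensity u) v a := by
  obtain ⟨N, hN⟩ := ENNReal.exists_nat_gt (r := 2 ^ (n + 3) * max Ku Kv) (by finiteness)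
  have hN0 : N ≠ 0 := by
    rintro rfl
    simp at hN
  obtain ⟨a, ha, ha', hdecay⟩ := exists_decay_ratio_of_halfProperty n (α := (4 * 2 ^ N)⁻¹)
    (ENNReal.inv_ne_zero.2 (by finiteness))
  refine ⟨a, ha, ha', fun u v hu hv huFW hvFW => hdecay u v hv ?_ ?_⟩
  · exact huFW.halfProperty hu.measurable hu.withDensity_ne_top hN0
      ((by gcongr; exact le_max_left _ _ : 2 ^ (n + 3) * Ku ≤ _).trans hN.le)
  · exact hvFW.halfProperty hv.measurable hv.withDensity_ne_top hN0
      ((by gcongr; exact le_max_right _ _ : 2 ^ (n + 3) * Kv ≤ _).trans hN.le)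

end DecayRatio

section A1

variable {n : ℕ}

/-- The `A₁` condition with constant `C` for a density, stated over half-open cubes. -/
def HalfOpenA1 (w : ESp n → ℝ≥0∞) (C : ℝ≥0∞) : Prop :=
  ∀ ⦃Q : Set (ESp n)⦄, IsHalfOpenCube Q →
    ∀ᵐ x, x ∈ Q → volume.withDensity w Q ≤ C * w x * volume Q

namespace HalfOpenA1

variable {w : ESp n → ℝ≥0∞} {C : ℝ≥0∞}

lemma ae_forall_mem_cubes (hw : HalfOpenA1 w C) (D : DyadicGrid n) :
    ∀ᵐ x, ∀ Q ∈ D.cubes, x ∈ Q → volume.withDensity w Q / volume Q ≤ C * w x := by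
  refine (ae_ball_iff DyadicGrid.countable_cubes).2 fun Q hQ => ?_
  have hQ' := DyadicGrid.isHalfOpenCube_of_mem_cubes hQ
  filter_upwards [hw hQ'] with x hx hxQ
  exact (ENNReal.div_le_iff hQ'.volume_ne_zero hQ'.volume_ne_top).2 (hx hxQ)

lemma dyadicFujiiWilson (hw : HalfOpenA1 w C) (hwm : Measurable w) :
    DyadicFujiiWilson (volume.withDensity w) C := by
  intro D
  rw [withDensity_apply _ DyadicGrid.isHalfOpenCube_root.measurableSet, ← lintegral_const_mul _ hwm]
  refine lintegral_mono_ae (ae_restrict_of_ae ?_)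
  filter_upwards [hw.ae_forall_mem_cubes D] with x hx
  exact iSup_le fun j => hx _ (DyadicGrid.cube_mem_cubes j x) (DyadicGrid.mem_cube_self j x)

end HalfOpenA1

end A1

section Levels

variable {n : ℕ} {μ : Measure (ESp n)} {a : ℝ≥0∞}

/-- The function `K` records the logarithmic size of averages: the average of `μ` over a cube `Q`
lies between `a ^ K Q` and `a ^ (K Q + 1)`. -/
def IsAverageLevel (μ : Measure (ESp n)) (a : ℝ≥0∞) (K : Set (ESp n) → ℤ) : Prop :=
  ∀ ⦃Q⦄, IsHalfOpenCube Q → a ^ K Q * volume Q ≤ μ Q ∧ μ Q ≤ a ^ (K Q + 1) * volume Q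

lemma exists_isAverageLevel (ha : 1 < a) (ha' : a ≠ ⊤) (hpos : ∀ Q, IsHalfOpenCube Q → μ Q ≠ 0)
    (hfin : ∀ Q, IsHalfOpenCube Q → μ Q ≠ ⊤) : ∃ K, IsAverageLevel μ a K := by
  have hlevel (Q : Set (ESp n)) : ∃ k : ℤ, IsHalfOpenCube Q →
      a ^ k * volume Q ≤ μ Q ∧ μ Q ≤ a ^ (k + 1) * volume Q := by
    by_cases hQ : IsHalfOpenCube Q
    · obtain ⟨k, hk⟩ := ENNReal.exists_mem_Ico_zpow (x := μ Q / volume Q)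
        (ENNReal.div_ne_zero.2 ⟨hpos Q hQ, hQ.volume_ne_top⟩)
        (ENNReal.div_ne_top (hfin Q hQ) hQ.volume_ne_zero) ha ha'
      exact ⟨k, fun _ =>
        ⟨(ENNReal.le_div_iff_mul_le (.inl hQ.volume_ne_zero) (.inl hQ.volume_ne_top)).1 hk.1,
          (ENNReal.div_le_iff hQ.volume_ne_zero hQ.volume_ne_top).1 hk.2.le⟩⟩
    · exact ⟨0, fun h => absurd h hQ⟩
  choose K hK using hlevel
  exact ⟨K, hK⟩

lemma tsum_inv_two_pow_natAbs_le : ∑' i : ℤ, (2⁻¹ : ℝ≥0∞) ^ i.natAbs ≤ 4 := by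
  have hgeom : ∑' m : ℕ, (2⁻¹ : ℝ≥0∞) ^ m = 2 := by
    rw [ENNReal.tsum_geometric, ENNReal.one_sub_inv_two, inv_inv]
  rw [tsum_of_nat_of_neg_add_one ENNReal.summable ENNReal.summable]
  calc ∑' m : ℕ, (2⁻¹ : ℝ≥0∞) ^ (m : ℤ).natAbs + ∑' m : ℕ, 2⁻¹ ^ (-((m : ℤ) + 1)).natAbs
      ≤ ∑' m : ℕ, (2⁻¹ : ℝ≥0∞) ^ m + ∑' m : ℕ, 2⁻¹ ^ m := by
        refine add_le_add le_rfl (ENNReal.tsum_le_tsum fun m => ?_)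
        exact pow_le_pow_right_of_le_one' (ENNReal.inv_le_one.2 one_le_two) (by omega)
    _ = 4 := by rw [hgeom]; norm_num

lemma tsum_inv_two_pow_natAbs_sub_le (k : ℤ) : ∑' i : ℤ, (2⁻¹ : ℝ≥0∞) ^ (i - k).natAbs ≤ 4 :=
  ((Equiv.subRight k).tsum_eq fun i : ℤ => (2⁻¹ : ℝ≥0∞) ^ i.natAbs).trans_le
    tsum_inv_two_pow_natAbs_le

lemma inv_two_pow_eq (m : ℕ) : (2⁻¹ : ℝ≥0∞) ^ m = 2 * 2⁻¹ ^ (m + 1) := by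
  rw [pow_succ, mul_comm, mul_assoc, ENNReal.inv_mul_cancel two_ne_zero ofNat_ne_top, mul_one]

lemma le_inv_pow_mul_of_zpow_mul_le {x y : ℝ≥0∞} (ha : a ≠ 0) (ha' : a ≠ ⊤) {k : ℤ} {m : ℕ}
    (h : a ^ (k + m) * x ≤ a ^ k * y) : x ≤ a⁻¹ ^ m * y := by
  rw [ENNReal.zpow_add ha ha', zpow_natCast, mul_assoc, ENNReal.mul_le_mul_iff_right
    (ENNReal.zpow_pos ha ha' k).ne' (ENNReal.zpow_ne_top ha ha' k)] at h
  rwa [← ENNReal.inv_pow, ← ENNReal.div_eq_inv_mul, ENNReal.le_div_iff_mul_le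
    (.inl (pow_ne_zero _ ha)) (.inl (ENNReal.pow_ne_top ha')), mul_comm]

lemma GeometricDecay.measure_le_of_zpow_mul_volume_le (hμ : GeometricDecay μ a) (ha : a ≠ 0)
    (ha' : a ≠ ⊤) {Q E : Set (ESp n)} (hQ : IsHalfOpenCube Q) (hE : MeasurableSet E) (hEQ : E ⊆ Q)
    {j k : ℤ} (hjk : j ≤ k) (h : a ^ k * volume E ≤ a ^ (j + 1) * volume Q) :
    μ E ≤ 2 * 2⁻¹ ^ (k - j).natAbs * μ Q := by
  rcases hjk.eq_or_lt with rfl | hlt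
  · rw [sub_self, Int.natAbs_zero, pow_zero, mul_one]
    exact (measure_mono hEQ).trans (le_mul_of_one_le_left zero_le one_le_two)
  · obtain ⟨m, rfl⟩ : ∃ m : ℕ, k = j + 1 + m := ⟨(k - j - 1).toNat, by omega⟩
    rw [show (j + 1 + m - j).natAbs = m + 1 by omega, ← inv_two_pow_eq]
    exact hμ m hQ hE hEQ (le_inv_pow_mul_of_zpow_mul_le ha ha' h)

namespace DyadicGrid

variable {D : DyadicGrid n} {𝒢 : Set (Set (ESp n))} {K : Set (ESp n) → ℤ}

lemma measure_sUnion_eq_tsum_of_isAntichain (h𝒢 : 𝒢 ⊆ D.cubes) (hanti : IsAntichain (· ⊆ ·) 𝒢)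
    (μ : Measure (ESp n)) : μ (⋃₀ 𝒢) = ∑' Q : 𝒢, μ Q := by
  refine measure_sUnion (countable_of_subset_cubes h𝒢) (fun Q hQ R hR hne => ?_) fun _ hQ =>
    (isHalfOpenCube_of_mem_cubes (h𝒢 hQ)).measurableSet
  by_contra hmeet
  rcases subset_or_subset (h𝒢 hQ) (h𝒢 hR) (not_disjoint_iff_nonempty_inter.1 hmeet) with hsub | hsub
  · exact hanti hQ hR hne hsub
  · exact hanti hR hQ hne.symm hsub

/-- The cubes of level `k` below `P` are disjoint and together have volume at most about
`a ^ (K P - k)` times that of `P`. -/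
lemma tsum_measure_level_le (h𝒢 : 𝒢 ⊆ D.cubes) (hμ : GeometricDecay μ a) (ha : 1 < a)
    (ha' : a ≠ ⊤) (hK : IsAverageLevel μ a K) (hanti : StrictAntiOn K 𝒢) {P : Set (ESp n)}
    (hP : P ∈ 𝒢) (k : ℤ) :
    ∑' Q : {Q ∈ 𝒢 | Q ⊆ P ∧ K Q = k}, μ Q ≤ 2 * 2⁻¹ ^ (k - K P).natAbs * μ P := by
  have ha0 : a ≠ 0 := (zero_lt_one.trans ha).ne'
  set S := {Q ∈ 𝒢 | Q ⊆ P ∧ K Q = k}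
  have hS : S ⊆ D.cubes := fun Q hQ => h𝒢 hQ.1
  have hantichain : IsAntichain (· ⊆ ·) S := fun Q hQ R hR hne hsub =>
    (hanti hQ.1 hR.1 (hsub.ssubset_of_ne hne)).ne (hR.2.2.trans hQ.2.2.symm)
  have hPcube := isHalfOpenCube_of_mem_cubes (h𝒢 hP)
  have hSP : ⋃₀ S ⊆ P := sUnion_subset fun Q hQ => hQ.2.1
  rw [← measure_sUnion_eq_tsum_of_isAntichain hS hantichain]
  rcases S.eq_empty_or_nonempty with hempty | ⟨R, hR⟩
  · simp [hempty]
  have hk : K P ≤ k := hR.2.2 ▸ hanti.antitoneOn hR.1 hP hR.2.1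
  have hzpow : a ^ k ≠ 0 := (ENNReal.zpow_pos ha0 ha' k).ne'
  have hzpow' : a ^ k ≠ ⊤ := ENNReal.zpow_ne_top ha0 ha' k
  refine hμ.measure_le_of_zpow_mul_volume_le ha0 ha' hPcube (measurableSet_sUnion hS) hSP hk ?_
  calc a ^ k * volume (⋃₀ S) ≤ a ^ k * ((a ^ k)⁻¹ * μ (⋃₀ S)) := by
        gcongr
        refine measure_sUnion_le_mul hS fun Q hQ => ?_
        have hQS := maximalCubes_subset S hQ
        rw [← ENNReal.div_eq_inv_mul, ENNReal.le_div_iff_mul_le (.inl hzpow) (.inl hzpow'),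
          mul_comm, ← hQS.2.2]
        exact (hK (isHalfOpenCube_of_mem_cubes (hS hQS))).1
    _ = μ (⋃₀ S) := by rw [← mul_assoc, ENNReal.mul_inv_cancel hzpow hzpow', one_mul]
    _ ≤ μ P := measure_mono hSP
    _ ≤ a ^ (K P + 1) * volume P := (hK hPcube).2

lemma tsum_measure_le_eight_mul_measure_sUnion (h𝒢 : 𝒢 ⊆ D.cubes) (hμ : GeometricDecay μ a)
    (ha : 1 < a) (ha' : a ≠ ⊤) (hK : IsAverageLevel μ a K) (hanti : StrictAntiOn K 𝒢) :
    ∑' Q : 𝒢, μ Q ≤ 8 * μ (⋃₀ 𝒢) := by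
  have hlevels (P : Set (ESp n)) : {Q ∈ 𝒢 | Q ⊆ P} = ⋃ k : ℤ, {Q ∈ 𝒢 | Q ⊆ P ∧ K Q = k} := by
    ext Q
    simp only [mem_iUnion, mem_ofPred_eq, exists_and_left, exists_eq', and_true]
  have hbelow (P : maximalCubes 𝒢) : ∑' Q : {Q ∈ 𝒢 | Q ⊆ P}, μ Q ≤ 8 * μ P :=
    calc ∑' Q : {Q ∈ 𝒢 | Q ⊆ P}, μ Q = ∑' Q : ⋃ k : ℤ, {Q ∈ 𝒢 | Q ⊆ P ∧ K Q = k}, μ Q := by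
          rw [← hlevels]
      _ ≤ ∑' k : ℤ, ∑' Q : {Q ∈ 𝒢 | Q ⊆ P ∧ K Q = k}, μ Q :=
        ENNReal.tsum_iUnion_le_tsum (fun Q => μ Q) _
      _ ≤ ∑' k : ℤ, 2 * 2⁻¹ ^ (k - K P).natAbs * μ P :=
        ENNReal.tsum_le_tsum fun k =>
          tsum_measure_level_le h𝒢 hμ ha ha' hK hanti (maximalCubes_subset 𝒢 P.2) k
      _ = 2 * (∑' k : ℤ, 2⁻¹ ^ (k - K P).natAbs) * μ P := by
        rw [ENNReal.tsum_mul_right, ENNReal.tsum_mul_left]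
      _ ≤ 2 * 4 * μ P := by gcongr; exact tsum_inv_two_pow_natAbs_sub_le _
      _ = 8 * μ P := by norm_num
  have hcover : 𝒢 = ⋃ P : maximalCubes 𝒢, {Q ∈ 𝒢 | Q ⊆ P} := by
    ext Q
    simp only [mem_iUnion, mem_ofPred_eq, exists_and_left, iff_self_and]
    intro hQ
    obtain ⟨P, hP, hQP⟩ := exists_subset_maximalCubes h𝒢 hQ
    exact ⟨⟨P, hP⟩, hQP⟩
  calc ∑' Q : 𝒢, μ Q = ∑' Q : ⋃ P : maximalCubes 𝒢, {Q ∈ 𝒢 | Q ⊆ P}, μ Q := by rw [← hcover]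
    _ ≤ ∑' P : maximalCubes 𝒢, ∑' Q : {Q ∈ 𝒢 | Q ⊆ P}, μ Q :=
      ENNReal.tsum_iUnion_le_tsum (fun Q => μ Q) _
    _ ≤ ∑' P : maximalCubes 𝒢, 8 * μ P := ENNReal.tsum_le_tsum hbelow
    _ = 8 * μ (⋃₀ 𝒢) := by
      rw [ENNReal.tsum_mul_left, measure_sUnion_eq_tsum_maximalCubes h𝒢]

end DyadicGrid

end Levels

section CarlesonEmbedding

lemma volume_Ioi_inter_ofReal_lt (x : ℝ≥0∞) :
    volume (Ioi (0 : ℝ) ∩ {t | ENNReal.ofReal t < x}) = x := by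
  rcases eq_or_ne x ⊤ with rfl | hx
  · simp
  · rw [show Ioi (0 : ℝ) ∩ {t | ENNReal.ofReal t < x} = Ioo 0 x.toReal by
      ext t
      exact and_congr_right fun ht => ENNReal.ofReal_lt_iff_lt_toReal (le_of_lt ht) hx,
      Real.volume_Ioo, sub_zero, ENNReal.ofReal_toReal hx]

variable {α : Type*} [MeasurableSpace α] {ν : Measure α} [SFinite ν] {φ : α → ℝ≥0∞}

lemma setLIntegral_Ioi_measure_ofReal_lt (hφ : Measurable φ) :
    ∫⁻ t in Ioi (0 : ℝ), ν {x | ENNReal.ofReal t < φ x} = ∫⁻ x, φ x ∂ν := by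
  have hm : MeasurableSet {p : ℝ × α | ENNReal.ofReal p.1 < φ p.2} :=
    measurableSet_lt (by fun_prop) (by fun_prop)
  calc ∫⁻ t in Ioi (0 : ℝ), ν {x | ENNReal.ofReal t < φ x}
      = (volume.restrict (Ioi (0 : ℝ))).prod ν {p | ENNReal.ofReal p.1 < φ p.2} :=
        (Measure.prod_apply hm).symm
    _ = ∫⁻ x, volume.restrict (Ioi (0 : ℝ)) {t | ENNReal.ofReal t < φ x} ∂ν :=
        Measure.prod_apply_symm hm
    _ = ∫⁻ x, φ x ∂ν := by
        refine lintegral_congr fun x => ?_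
        rw [Measure.restrict_apply (measurableSet_lt (by fun_prop) measurable_const), inter_comm,
          volume_Ioi_inter_ofReal_lt]

/-- Writing `c Q = ∫₀^∞ 1_{t < c Q} dt`, the sum is an integral in `t` of sums over the subfamilies
`{Q ∈ 𝒢 | t < c Q}`, whose unions lie in `{φ > t}`. -/
lemma tsum_mul_le_mul_lintegral_of_carleson {𝒢 : Set (Set α)} (h𝒢 : 𝒢.Countable)
    {b c : Set α → ℝ≥0∞} {A : ℝ≥0∞} (hφ : Measurable φ)
    (hpack : ∀ 𝒮 ⊆ 𝒢, ∑' Q : 𝒮, b Q ≤ A * ν (⋃₀ 𝒮))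
    (hc : ∀ᵐ x ∂ν, ∀ Q ∈ 𝒢, x ∈ Q → c Q ≤ φ x) :
    ∑' Q : 𝒢, c Q * b Q ≤ A * ∫⁻ x, φ x ∂ν := by
  have : Countable 𝒢 := h𝒢.to_subtype
  have hlt (y : ℝ≥0∞) : MeasurableSet {t : ℝ | ENNReal.ofReal t < y} :=
    measurableSet_lt (by fun_prop) measurable_const
  have hanti : Antitone fun t : ℝ => ν {x | ENNReal.ofReal t < φ x} := fun s t hst =>
    measure_mono fun x hx => (ENNReal.ofReal_le_ofReal hst).trans_lt hx
  have hsum (t : ℝ) : ∑' Q : 𝒢, {s | ENNReal.ofReal s < c Q}.indicator (fun _ => b Q) t =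
      ∑' Q : {Q ∈ 𝒢 | ENNReal.ofReal t < c Q}, b Q := by
    rw [tsum_subtype 𝒢 fun Q => {s | ENNReal.ofReal s < c Q}.indicator (fun _ => b Q) t,
      tsum_subtype {Q ∈ 𝒢 | ENNReal.ofReal t < c Q} b]
    refine tsum_congr fun Q => ?_
    by_cases hQ : Q ∈ 𝒢 <;> simp [indicator, hQ]
  calc ∑' Q : 𝒢, c Q * b Q
      = ∑' Q : 𝒢, ∫⁻ t in Ioi (0 : ℝ),
          {s | ENNReal.ofReal s < c Q}.indicator (fun _ => b Q) t := by
        refine tsum_congr fun Q => ?_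
        rw [lintegral_indicator_const (hlt _), Measure.restrict_apply (hlt _), inter_comm,
          volume_Ioi_inter_ofReal_lt, mul_comm]
    _ = ∫⁻ t in Ioi (0 : ℝ), ∑' Q : {Q ∈ 𝒢 | ENNReal.ofReal t < c Q}, b Q := by
        rw [← lintegral_tsum fun Q => (measurable_const.indicator (hlt _)).aemeasurable]
        exact lintegral_congr hsum
    _ ≤ ∫⁻ t in Ioi (0 : ℝ), A * ν {x | ENNReal.ofReal t < φ x} := by
        refine lintegral_mono fun t => (hpack _ (sep_subset _ _)).trans ?_
        gcongr A * ?_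
        refine measure_mono_ae ?_
        filter_upwards [hc] with x hx
        rintro ⟨Q, ⟨hQ, ht⟩, hxQ⟩
        exact ht.trans_le (hx Q hQ hxQ)
    _ = A * ∫⁻ x, φ x ∂ν := by
        rw [lintegral_const_mul _ hanti.measurable, setLIntegral_Ioi_measure_ofReal_lt hφ]

end CarlesonEmbedding

section LevelSets

lemma mul_measure_le_withDensity {α : Type*} [MeasurableSpace α] {μ : Measure α} {v : α → ℝ≥0∞}
    {t : ℝ≥0∞} {E : Set α} (hE : MeasurableSet E) (h : ∀ x ∈ E, t ≤ v x) :
    t * μ E ≤ μ.withDensity v E := by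
  rw [withDensity_apply _ hE, ← setLIntegral_const]
  exact setLIntegral_mono' hE h

lemma withDensity_le_mul_measure {α : Type*} [MeasurableSpace α] {μ : Measure α} {v : α → ℝ≥0∞}
    {t : ℝ≥0∞} {E : Set α} (hE : MeasurableSet E) (h : ∀ x ∈ E, v x ≤ t) :
    μ.withDensity v E ≤ t * μ E := by
  rw [withDensity_apply _ hE, ← setLIntegral_const]
  exact setLIntegral_mono' hE h

variable {n : ℕ} {μ : Measure (ESp n)} {v : ESp n → ℝ≥0∞} {a : ℝ≥0∞} {K : Set (ESp n) → ℤ}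

lemma SublevelDecay.measure_inter_le_of_zpow_mul_volume_le (hv : SublevelDecay μ v a) (ha : a ≠ 0)
    (ha' : a ≠ ⊤) {Q : Set (ESp n)} (hQ : IsHalfOpenCube Q) {j k : ℤ} (hjk : j ≤ k)
    (h : a ^ k * volume Q ≤ volume.withDensity v Q) :
    μ (Q ∩ {x | v x ≤ a ^ (j + 1)}) ≤ 2 * 2⁻¹ ^ (k - j).natAbs * μ Q := by
  rcases hjk.eq_or_lt with rfl | hlt
  · rw [sub_self, Int.natAbs_zero, pow_zero, mul_one]
    exact (measure_mono inter_subset_left).trans (le_mul_of_one_le_left zero_le one_le_two)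
  · obtain ⟨m, rfl⟩ : ∃ m : ℕ, k = j + 1 + m := ⟨(k - j - 1).toNat, by omega⟩
    rw [show (j + 1 + m - j).natAbs = m + 1 by omega, ← inv_two_pow_eq]
    refine (measure_mono (inter_subset_inter_right Q fun x (hx : v x ≤ _) => ?_)).trans (hv m hQ)
    calc v x * volume Q ≤ a ^ (j + 1) * volume Q := by gcongr
      _ ≤ a⁻¹ ^ m * volume.withDensity v Q := by
        refine le_inv_pow_mul_of_zpow_mul_le ha ha' (k := j + 1) ?_
        rw [mul_left_comm]
        gcongr

/-- If the mean of `v` over `Q` is far below `a ^ k` the level set is thin in `Q`, by the decay of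
`μ`; if it is far above, `v` is far below its mean on the level set. -/
lemma measure_inter_preimage_Ioc_zpow_le (hμ : GeometricDecay μ a) (hμv : SublevelDecay μ v a)
    (hv : Measurable v) (ha : a ≠ 0) (ha' : a ≠ ⊤) (hK : IsAverageLevel (volume.withDensity v) a K)
    {Q : Set (ESp n)} (hQ : IsHalfOpenCube Q) (k : ℤ) :
    μ (v ⁻¹' Ioc (a ^ k) (a ^ (k + 1)) ∩ Q) ≤ 2 * 2⁻¹ ^ (K Q - k).natAbs * μ Q := by
  have hE : MeasurableSet (v ⁻¹' Ioc (a ^ k) (a ^ (k + 1)) ∩ Q) :=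
    (hv measurableSet_Ioc).inter hQ.measurableSet
  rcases le_total (K Q) k with hk | hk
  · rw [← Int.natAbs_neg, neg_sub]
    refine hμ.measure_le_of_zpow_mul_volume_le ha ha' hQ hE inter_subset_right hk ?_
    calc a ^ k * volume (v ⁻¹' Ioc (a ^ k) (a ^ (k + 1)) ∩ Q)
        ≤ volume.withDensity v (v ⁻¹' Ioc (a ^ k) (a ^ (k + 1)) ∩ Q) :=
          mul_measure_le_withDensity hE fun x hx => hx.1.1.le
      _ ≤ volume.withDensity v Q := measure_mono inter_subset_right
      _ ≤ a ^ (K Q + 1) * volume Q := (hK hQ).2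
  · refine (measure_mono fun x hx => ?_).trans
      (hμv.measure_inter_le_of_zpow_mul_volume_le ha ha' hQ hk (hK hQ).1)
    exact ⟨hx.2, hx.1.2⟩

end LevelSets

lemma tsum_tsum_int_eq_tsum_tsum_sub {β : Type*} (A : ℤ → Set β) (K : β → ℤ) (F : ℤ → β → ℝ≥0∞) :
    ∑' k, ∑' Q : A k, F k Q = ∑' l, ∑' Q : {Q | Q ∈ A (K Q - l)}, F (K Q - l) Q := by
  have hk (k : ℤ) : ∑' Q : A k, F k Q = ∑' Q, (A k).indicator (F k) Q := tsum_subtype _ _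
  have hl (l : ℤ) : ∑' Q : {Q | Q ∈ A (K Q - l)}, F (K Q - l) Q =
      ∑' Q, (A (K Q - l)).indicator (F (K Q - l)) Q := by
    rw [tsum_subtype {Q | Q ∈ A (K Q - l)} fun Q => F (K Q - l) Q]
    rfl
  simp_rw [hk, hl]
  rw [ENNReal.tsum_comm, ENNReal.tsum_comm (α := ℤ)]
  exact tsum_congr fun Q =>
    ((Equiv.subLeft (K Q)).tsum_eq fun k => (A k).indicator (F k) Q).symm

namespace DyadicGrid

section GapCubes

variable {n : ℕ} (D : DyadicGrid n)

/-- The cubes of the grid over which the average of `ν` is at least `t`; their union is a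
superlevel set of the dyadic maximal function of `ν`. -/
def superlevelCubes (ν : Measure (ESp n)) (t : ℝ≥0∞) : Set (Set (ESp n)) :=
  {Q ∈ D.cubes | t * volume Q ≤ ν Q}

/-- The cubes that are maximal among those with `ν`-average at least `a ^ k`, where `k` lies
exactly `l` below the level `K` of the cube. -/
def gapCubes (ν : Measure (ESp n)) (a : ℝ≥0∞) (K : Set (ESp n) → ℤ) (l : ℤ) :
    Set (Set (ESp n)) :=
  {Q | Q ∈ maximalCubes (D.superlevelCubes ν (a ^ (K Q - l)))}

variable {D} {μ ν : Measure (ESp n)} {a : ℝ≥0∞} {K : Set (ESp n) → ℤ} {l : ℤ}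

lemma superlevelCubes_subset_cubes {t : ℝ≥0∞} : D.superlevelCubes ν t ⊆ D.cubes := sep_subset _ _

lemma gapCubes_subset_cubes : D.gapCubes ν a K l ⊆ D.cubes := fun _ hQ => hQ.prop.1

/-- If `Q ⊂ P` had `K Q ≤ K P`, then `P` would compete with `Q` for maximality. -/
lemma strictAntiOn_gapCubes (ha : 1 ≤ a) : StrictAntiOn K (D.gapCubes ν a K l) := by
  intro Q hQ P hP hQP
  by_contra! hle
  refine hQP.not_subset (hQ.le_of_ge ⟨hP.prop.1, le_trans ?_ hP.prop.2⟩ hQP.subset)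
  gcongr ?_ * _
  exact ENNReal.zpow_le_of_le ha (by omega)

lemma tsum_measure_le_of_subset_gapCubes (hμ : GeometricDecay μ a) (ha : 1 < a) (ha' : a ≠ ⊤)
    (hK : IsAverageLevel μ a K) {𝒢 : Set (Set (ESp n))} (h𝒢 : 𝒢 ⊆ D.gapCubes ν a K l) :
    ∑' Q : 𝒢, μ Q ≤ 8 * a ^ (l + 1) * ν (⋃₀ 𝒢) := by
  have ha0 : a ≠ 0 := (zero_lt_one.trans ha).ne'
  have h𝒢D := h𝒢.trans gapCubes_subset_cubes
  rw [mul_assoc]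
  refine (tsum_measure_le_eight_mul_measure_sUnion h𝒢D hμ ha ha' hK
    ((strictAntiOn_gapCubes ha.le).mono h𝒢)).trans ?_
  gcongr 8 * ?_
  refine measure_sUnion_le_mul h𝒢D fun Q hQ => ?_
  calc μ Q ≤ a ^ (K Q + 1) * volume Q := (hK (isHalfOpenCube_of_mem_cubes (h𝒢D hQ.prop))).2
    _ = a ^ (l + 1) * (a ^ (K Q - l) * volume Q) := by
      rw [← mul_assoc, ← ENNReal.zpow_add ha0 ha']
      ring_nf
    _ ≤ a ^ (l + 1) * ν Q := by
      gcongr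
      exact (h𝒢 hQ.prop).prop.2

end GapCubes

section MainEstimate

variable {n : ℕ} {D : DyadicGrid n} {μ ν : Measure (ESp n)} {v φ : ESp n → ℝ≥0∞} {a : ℝ≥0∞}
  {K : Set (ESp n) → ℤ}

lemma tsum_zpow_mul_measure_gapCubes_le [SFinite ν] {σ : Measure (ESp n)} (hσ : GeometricDecay σ a)
    (ha : 1 < a) (ha' : a ≠ ⊤) (hK : IsAverageLevel σ a K) (hφ : Measurable φ)
    (hμφ : ∀ᵐ x ∂ν, ∀ Q ∈ D.cubes, x ∈ Q → μ Q / volume Q ≤ φ x) (l : ℤ) :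
    ∑' Q : D.gapCubes ν a K l, a ^ (K Q - l) * μ Q ≤ 8 * a * ∫⁻ x, φ x ∂ν := by
  have ha0 : a ≠ 0 := (zero_lt_one.trans ha).ne'
  have hterm (Q : D.gapCubes ν a K l) :
      a ^ (K Q - l) * μ Q ≤ a ^ (-l) * (μ Q / volume (Q : Set (ESp n)) * σ Q) := by
    have hQ := isHalfOpenCube_of_mem_cubes (gapCubes_subset_cubes Q.2)
    calc a ^ (K Q - l) * μ Q
        = a ^ (-l) * (μ Q / volume (Q : Set (ESp n)) * (a ^ K Q * volume (Q : Set (ESp n)))) := by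
          rw [sub_eq_neg_add, ENNReal.zpow_add ha0 ha', mul_left_comm (μ Q / _),
            ENNReal.div_mul_cancel hQ.volume_ne_zero hQ.volume_ne_top, mul_assoc]
      _ ≤ a ^ (-l) * (μ Q / volume (Q : Set (ESp n)) * σ Q) := by
          gcongr
          exact (hK hQ).1
  calc ∑' Q : D.gapCubes ν a K l, a ^ (K Q - l) * μ Q
      ≤ a ^ (-l) * ∑' Q : D.gapCubes ν a K l, μ Q / volume (Q : Set (ESp n)) * σ Q := by
        rw [← ENNReal.tsum_mul_left]
        exact ENNReal.tsum_le_tsum hterm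
    _ ≤ a ^ (-l) * (8 * a ^ (l + 1) * ∫⁻ x, φ x ∂ν) := by
        gcongr
        refine tsum_mul_le_mul_lintegral_of_carleson (countable_of_subset_cubes
          gapCubes_subset_cubes) (c := fun Q => μ Q / volume Q) hφ
          (fun 𝒮 h𝒮 => tsum_measure_le_of_subset_gapCubes hσ ha ha' hK h𝒮) ?_
        filter_upwards [hμφ] with x hx Q hQ
        exact hx Q (gapCubes_subset_cubes hQ)
    _ = 8 * (a ^ (-l) * a ^ (l + 1)) * ∫⁻ x, φ x ∂ν := by ring
    _ = 8 * a * ∫⁻ x, φ x ∂ν := by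
        rw [← ENNReal.zpow_add ha0 ha', neg_add_cancel_left, zpow_one]

lemma withDensity_preimage_Ioc_inter_superlevelCubes_le (hμ : GeometricDecay μ a)
    (hμv : SublevelDecay μ v a) (hv : Measurable v) (ha : a ≠ 0) (ha' : a ≠ ⊤)
    (hK : IsAverageLevel (volume.withDensity v) a K) (k : ℤ) :
    μ.withDensity v (v ⁻¹' Ioc (a ^ k) (a ^ (k + 1)) ∩ ⋃₀ D.superlevelCubes ν (a ^ k)) ≤
      ∑' Q : maximalCubes (D.superlevelCubes ν (a ^ k)),
        a ^ (k + 1) * (2 * 2⁻¹ ^ (K Q - k).natAbs * μ Q) := by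
  set E := v ⁻¹' Ioc (a ^ k) (a ^ (k + 1))
  set S := D.superlevelCubes ν (a ^ k)
  have hE : MeasurableSet E := hv measurableSet_Ioc
  have hS : S ⊆ D.cubes := superlevelCubes_subset_cubes
  calc μ.withDensity v (E ∩ ⋃₀ S) ≤ a ^ (k + 1) * μ (E ∩ ⋃₀ S) :=
        withDensity_le_mul_measure (hE.inter (measurableSet_sUnion hS)) fun x hx => hx.1.2
    _ = a ^ (k + 1) * ∑' Q : maximalCubes S, μ.restrict E Q := by
        rw [← measure_sUnion_eq_tsum_maximalCubes hS, Measure.restrict_apply' hE, inter_comm]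
    _ ≤ a ^ (k + 1) * ∑' Q : maximalCubes S, 2 * 2⁻¹ ^ (K Q - k).natAbs * μ Q := by
        gcongr with Q
        rw [Measure.restrict_apply' hE, inter_comm]
        exact measure_inter_preimage_Ioc_zpow_le hμ hμv hv ha ha' hK
          (isHalfOpenCube_of_mem_cubes (hS Q.2.prop)) k
    _ = _ := ENNReal.tsum_mul_left.symm

lemma tsum_tsum_maximalCubes_eq_tsum_gapCubes (ha : a ≠ 0) (ha' : a ≠ ⊤) :
    ∑' k : ℤ, ∑' Q : maximalCubes (D.superlevelCubes ν (a ^ k)),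
        a ^ (k + 1) * (2 * 2⁻¹ ^ (K Q - k).natAbs * μ Q) =
      ∑' l : ℤ, 2 * a * 2⁻¹ ^ l.natAbs * ∑' Q : D.gapCubes ν a K l, a ^ (K Q - l) * μ Q := by
  calc ∑' k : ℤ, ∑' Q : maximalCubes (D.superlevelCubes ν (a ^ k)),
          a ^ (k + 1) * (2 * 2⁻¹ ^ (K Q - k).natAbs * μ Q)
      = ∑' l : ℤ, ∑' Q : D.gapCubes ν a K l,
          a ^ (K Q - l + 1) * (2 * 2⁻¹ ^ (K Q - (K Q - l)).natAbs * μ Q) :=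
        tsum_tsum_int_eq_tsum_tsum_sub _ K fun k Q =>
          a ^ (k + 1) * (2 * 2⁻¹ ^ (K Q - k).natAbs * μ Q)
    _ = ∑' l : ℤ, 2 * a * 2⁻¹ ^ l.natAbs * ∑' Q : D.gapCubes ν a K l, a ^ (K Q - l) * μ Q := by
        refine tsum_congr fun l => ?_
        rw [← ENNReal.tsum_mul_left]
        refine tsum_congr fun Q => ?_
        rw [ENNReal.zpow_add ha ha', zpow_one, sub_sub_self]
        ring

lemma setOf_exists_average_le_subset (hv : ∀ x, v x ≠ ⊤) (ha : 1 < a) (ha' : a ≠ ⊤) :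
    {x | ∃ j, v x * volume (D.cube j x) ≤ ν (D.cube j x)} ⊆ v ⁻¹' {0} ∪
      ⋃ k : ℤ, v ⁻¹' Ioc (a ^ k) (a ^ (k + 1)) ∩ ⋃₀ D.superlevelCubes ν (a ^ k) := by
  rintro x ⟨j, hj⟩
  refine or_iff_not_imp_left.2 fun h0 => ?_
  obtain ⟨k, hk⟩ := ENNReal.exists_mem_Ioc_zpow h0 (hv x) ha ha'
  refine mem_iUnion.2 ⟨k, hk, D.cube j x, ⟨cube_mem_cubes j x, le_trans ?_ hj⟩, mem_cube_self j x⟩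
  gcongr
  exact hk.1.le

theorem withDensity_exists_average_le [SFinite ν] (hμ : GeometricDecay μ a)
    (hσ : GeometricDecay (volume.withDensity v) a) (hμv : SublevelDecay μ v a)
    (hv : IsCubeWeight v) (hvtop : ∀ x, v x ≠ ⊤) (ha : 1 < a) (ha' : a ≠ ⊤) (hφ : Measurable φ)
    (hμφ : ∀ᵐ x ∂ν, ∀ Q ∈ D.cubes, x ∈ Q → μ Q / volume Q ≤ φ x) :
    μ.withDensity v {x | ∃ j, v x * volume (D.cube j x) ≤ ν (D.cube j x)} ≤
      64 * a ^ 2 * ∫⁻ x, φ x ∂ν := by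
  have ha0 : a ≠ 0 := (zero_lt_one.trans ha).ne'
  obtain ⟨K, hK⟩ := exists_isAverageLevel ha ha' hv.withDensity_ne_zero hv.withDensity_ne_top
  have hzero : μ.withDensity v (v ⁻¹' {0}) = 0 := by
    rw [withDensity_apply_eq_zero hv.measurable]
    exact measure_mono_null (fun x hx => hx.1 hx.2) measure_empty
  let E (k : ℤ) := v ⁻¹' Ioc (a ^ k) (a ^ (k + 1)) ∩ ⋃₀ D.superlevelCubes ν (a ^ k)
  calc μ.withDensity v {x | ∃ j, v x * volume (D.cube j x) ≤ ν (D.cube j x)}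
      ≤ μ.withDensity v (v ⁻¹' {0} ∪ ⋃ k : ℤ, E k) :=
        measure_mono (setOf_exists_average_le_subset hvtop ha ha')
    _ ≤ μ.withDensity v (⋃ k : ℤ, E k) := by
        simpa only [hzero, zero_add] using measure_union_le (μ := μ.withDensity v) (v ⁻¹' {0}) _
    _ ≤ ∑' k : ℤ, μ.withDensity v (E k) := measure_iUnion_le _
    _ ≤ ∑' k : ℤ, ∑' Q : maximalCubes (D.superlevelCubes ν (a ^ k)),
          a ^ (k + 1) * (2 * 2⁻¹ ^ (K Q - k).natAbs * μ Q) := ENNReal.tsum_le_tsum fun k =>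
        withDensity_preimage_Ioc_inter_superlevelCubes_le hμ hμv hv.measurable ha0 ha' hK k
    _ = ∑' l : ℤ, 2 * a * 2⁻¹ ^ l.natAbs * ∑' Q : D.gapCubes ν a K l, a ^ (K Q - l) * μ Q :=
        tsum_tsum_maximalCubes_eq_tsum_gapCubes ha0 ha'
    _ ≤ ∑' l : ℤ, 2 * a * 2⁻¹ ^ l.natAbs * (8 * a * ∫⁻ x, φ x ∂ν) := by
        gcongr with l
        exact tsum_zpow_mul_measure_gapCubes_le hσ ha ha' hK hφ hμφ l
    _ = 2 * a * (∑' l : ℤ, 2⁻¹ ^ l.natAbs) * (8 * a * ∫⁻ x, φ x ∂ν) := by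
        rw [ENNReal.tsum_mul_right, ENNReal.tsum_mul_left]
    _ ≤ 2 * a * 4 * (8 * a * ∫⁻ x, φ x ∂ν) := by
        gcongr
        exact tsum_inv_two_pow_natAbs_le
    _ = 64 * a ^ 2 * ∫⁻ x, φ x ∂ν := by ring

end MainEstimate

end DyadicGrid

section ShiftedGrids

variable {n : ℕ}

/-- Otherwise there are integers `p ∈ (A, A + δ]` and `q ∈ (A - 2 ^ j / 3, A + δ - 2 ^ j / 3]`;
since `δ ≤ 1/3` this forces `3 * (p - q) = 2 ^ j`. -/
lemma floor_eq_floor_or_floor_sub_third_eq (j : ℕ) {A δ : ℝ} (hδ0 : 0 ≤ δ) (hδ : 3 * δ ≤ 1) :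
    ⌊A⌋ = ⌊A + δ⌋ ∨ ⌊A - 2 ^ j / 3⌋ = ⌊A - 2 ^ j / 3 + δ⌋ := by
  have lt_floor {B : ℝ} (hB : ⌊B⌋ ≠ ⌊B + δ⌋) : B < ⌊B + δ⌋ :=
    Int.floor_lt.1 ((Int.floor_le_floor (le_add_of_nonneg_right hδ0)).lt_of_ne hB)
  by_contra! hne
  have hp_lt := lt_floor hne.1
  have hq_lt := lt_floor hne.2
  set p := ⌊A + δ⌋
  set q := ⌊A - 2 ^ j / 3 + δ⌋
  have hp_le : (p : ℝ) ≤ A + δ := Int.floor_le _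
  have hq_le : (q : ℝ) ≤ A - 2 ^ j / 3 + δ := Int.floor_le _
  have hlt : 3 * (p - q) < 2 ^ j + 1 := by
    exact_mod_cast (by linarith : (3 * (p - q) : ℝ) < 2 ^ j + 1)
  have hgt : (2 : ℤ) ^ j - 1 < 3 * (p - q) := by
    exact_mod_cast (by linarith : (2 : ℝ) ^ j - 1 < 3 * (p - q))
  have hdvd : (3 : ℤ) ∣ 2 ^ j := ⟨p - q, by omega⟩
  exact absurd (Int.prime_three.dvd_of_dvd_pow hdvd) (by norm_num)

namespace DyadicGrid

/-- The `2 ^ n` grids with root of side `2 ^ N` whose origins are shifted by one third of the side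
in the coordinates selected by `e`. -/
def shifted (N : ℕ) (e : Fin n → Bool) : DyadicGrid n where
  origin i := if e i then 2 ^ N / 3 else 0
  side := 2 ^ N
  side_pos := by positivity

lemma exists_floor_shifted_eq (j N : ℕ) {h : ℝ} (h0 : 0 ≤ h) (hle : 3 * h * 2 ^ j ≤ 2 ^ N)
    (c : ℝ) : ∃ b : Bool, ⌊(2 ^ j * ((c - if b then 2 ^ N / 3 else 0) / 2 ^ N) : ℝ)⌋ =
      ⌊(2 ^ j * ((c + h - if b then 2 ^ N / 3 else 0) / 2 ^ N) : ℝ)⌋ := by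
  have hδ : 3 * (2 ^ j * h / 2 ^ N) ≤ 1 := by
    rw [← mul_div_assoc, div_le_one (by positivity)]
    linarith
  rcases floor_eq_floor_or_floor_sub_third_eq j (A := 2 ^ j * (c / 2 ^ N)) (by positivity) hδ
    with heq | heq
  · refine ⟨false, ?_⟩
    convert heq using 2 <;> field_simp <;> simp
  · refine ⟨true, ?_⟩
    convert heq using 2 <;> simp only [if_true] <;> field_simp
    ring

lemma closedCube_subset_cube_of_floor_eq {D : DyadicGrid n} {j : ℕ} {c : Fin n → ℝ} {h : ℝ}
    (hfloor : ∀ i, ⌊2 ^ j * ((c i - D.origin i) / D.side)⌋ =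
      ⌊2 ^ j * ((c i + h - D.origin i) / D.side)⌋) {x : ESp n} (hx : x ∈ closedCube c h) :
    closedCube c h ⊆ D.cube j x := by
  have hs := D.side_pos
  have hconst {z : ESp n} (hz : z ∈ closedCube c h) (i : Fin n) :
      ⌊2 ^ j * ((z i - D.origin i) / D.side)⌋ = ⌊2 ^ j * ((c i - D.origin i) / D.side)⌋ := by
    refine le_antisymm ?_ (Int.floor_le_floor ?_)
    · rw [hfloor i]
      refine Int.floor_le_floor ?_
      gcongr
      exact (hz i).2
    · gcongr
      exact (hz i).1
  exact fun y hy i => (hconst hy i).trans (hconst hx i).symm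

lemma exists_shifted_cube {N : ℕ} {h : ℝ} (hh : 0 < h) (hN : 3 * h ≤ 2 ^ N) (c : Fin n → ℝ) :
    ∃ e j, ∀ x ∈ closedCube c h, closedCube c h ⊆ (shifted N e).cube j x ∧
      volume ((shifted N e).cube j x) ≤ 6 ^ n * volume (closedCube c h) := by
  obtain ⟨j, hj, hj'⟩ := exists_nat_pow_near (x := 2 ^ N / (3 * h)) (y := 2)
    ((one_le_div (by positivity)).2 hN) one_lt_two
  rw [le_div_iff₀ (by positivity)] at hj
  rw [div_lt_iff₀ (by positivity), pow_succ] at hj'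
  choose e he using fun i => exists_floor_shifted_eq j N hh.le (by linarith) (c i)
  refine ⟨e, j, fun x hx => ⟨closedCube_subset_cube_of_floor_eq he hx, ?_⟩⟩
  rw [cube_eq_halfOpenCube, volume_halfOpenCube, volume_closedCube, ← mul_pow]
  gcongr
  rw [← ENNReal.ofReal_ofNat, ← ENNReal.ofReal_mul (by norm_num)]
  refine ENNReal.ofReal_le_ofReal ?_
  rw [div_le_iff₀ (by positivity)]
  change (2 : ℝ) ^ N ≤ _
  linarith

end DyadicGrid

variable {μ ν : Measure (ESp n)} {v φ : ESp n → ℝ≥0∞}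

/-- It suffices to treat cubes of bounded side, which the shifted grids of one fixed scale
control. -/
lemma measure_exists_isCube_average_le (μ : Measure (ESp n)) {C : ℝ≥0∞}
    (h : ∀ N : ℕ, μ {x | ∃ c h, 0 < h ∧ 3 * h ≤ 2 ^ N ∧ x ∈ closedCube c h ∧
      v x * volume (closedCube c h) ≤ ν (closedCube c h)} ≤ C) :
    μ {x | ∃ Q, IsCube Q ∧ x ∈ Q ∧ v x * volume Q ≤ ν Q} ≤ C := by
  set A : ℕ → Set (ESp n) := fun N => {x | ∃ c h, 0 < h ∧ 3 * h ≤ 2 ^ N ∧ x ∈ closedCube c h ∧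
      v x * volume (closedCube c h) ≤ ν (closedCube c h)}
  have hmono : Monotone A := by
    rintro M N hMN x ⟨c, h, hh, hM, hx⟩
    exact ⟨c, h, hh, hM.trans (pow_le_pow_right₀ one_le_two hMN), hx⟩
  have hcover : {x | ∃ Q, IsCube Q ∧ x ∈ Q ∧ v x * volume Q ≤ ν Q} ⊆ ⋃ N, A N := by
    rintro x ⟨_, ⟨c, h, hh, rfl⟩, hx⟩
    obtain ⟨N, hN⟩ := pow_unbounded_of_one_lt (3 * h) (one_lt_two : (1 : ℝ) < 2)
    exact mem_iUnion.2 ⟨N, c, h, hh, hN.le, hx⟩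
  refine (measure_mono hcover).trans ?_
  rw [hmono.measure_iUnion]
  exact iSup_le h

theorem withDensity_exists_isCube_average_le [SFinite ν] {a : ℝ≥0∞} (hμ : GeometricDecay μ a)
    (hσ : GeometricDecay (volume.withDensity v) a) (hμv : SublevelDecay μ v a)
    (hv : IsCubeWeight v) (hvtop : ∀ x, v x ≠ ⊤) (ha : 1 < a) (ha' : a ≠ ⊤) (hφ : Measurable φ)
    (hμφ : ∀ D : DyadicGrid n, ∀ᵐ x ∂ν, ∀ Q ∈ D.cubes, x ∈ Q → μ Q / volume Q ≤ φ x) :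
    μ.withDensity v {x | ∃ Q, IsCube Q ∧ x ∈ Q ∧ v x * volume Q ≤ ν Q} ≤
      12 ^ n * 64 * a ^ 2 * ∫⁻ x, φ x ∂ν := by
  refine measure_exists_isCube_average_le _ fun N => ?_
  have hshift : {x | ∃ c h, 0 < h ∧ 3 * h ≤ 2 ^ N ∧ x ∈ closedCube c h ∧
      v x * volume (closedCube c h) ≤ ν (closedCube c h)} ⊆ ⋃ e : Fin n → Bool,
      {x | ∃ j, v x * volume ((DyadicGrid.shifted N e).cube j x) ≤
        ((6 : ℝ≥0∞) ^ n • ν) ((DyadicGrid.shifted N e).cube j x)} := by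
    rintro x ⟨c, h, hh, hN, hx, hle⟩
    obtain ⟨e, j, hej⟩ := DyadicGrid.exists_shifted_cube hh hN c
    obtain ⟨hsub, hvol⟩ := hej x hx
    refine mem_iUnion.2 ⟨e, j, ?_⟩
    calc v x * volume ((DyadicGrid.shifted N e).cube j x)
        ≤ v x * (6 ^ n * volume (closedCube c h)) := by gcongr
      _ = 6 ^ n * (v x * volume (closedCube c h)) := by ring
      _ ≤ 6 ^ n * ν ((DyadicGrid.shifted N e).cube j x) := by
        gcongr
        exact hle.trans (measure_mono hsub)
  refine (measure_mono hshift).trans ((measure_iUnion_le _).trans ?_)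
  calc ∑' e : Fin n → Bool, μ.withDensity v {x | ∃ j,
          v x * volume ((DyadicGrid.shifted N e).cube j x) ≤
            ((6 : ℝ≥0∞) ^ n • ν) ((DyadicGrid.shifted N e).cube j x)}
      ≤ ∑' _ : Fin n → Bool, 64 * a ^ 2 * ∫⁻ x, φ x ∂((6 : ℝ≥0∞) ^ n • ν) :=
        ENNReal.tsum_le_tsum fun e => DyadicGrid.withDensity_exists_average_le hμ hσ hμv hv hvtop
          ha ha' hφ (Measure.ae_smul_measure (hμφ _) _)
    _ = 12 ^ n * 64 * a ^ 2 * ∫⁻ x, φ x ∂ν := by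
        rw [tsum_fintype, Finset.sum_const, Finset.card_univ, Fintype.card_fun, Fintype.card_bool,
          Fintype.card_fin, nsmul_eq_mul, lintegral_smul_measure, smul_eq_mul,
          show (12 : ℝ≥0∞) = 2 * 6 by norm_num, mul_pow]
        push_cast
        ring

end ShiftedGrids

section Weights

variable {n : ℕ}

lemma wMeas_eq_withDensity (w : ESp n → ℝ) (E : Set (ESp n)) :
    wMeas w E = volume.withDensity (fun x => ENNReal.ofReal (w x)) E :=
  (withDensity_apply' _ _).symm

lemma wMeas_closedCube (w : ESp n → ℝ) (c : Fin n → ℝ) (h : ℝ) :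
    wMeas w (closedCube c h) =
      volume.withDensity (fun x => ENNReal.ofReal (w x)) (halfOpenCube c h) := by
  rw [wMeas_eq_withDensity]
  exact measure_congr <|
    (withDensity_absolutelyContinuous _ _).ae_eq (halfOpenCube_ae_eq_closedCube c h).symm

lemma IsWeight.isCubeWeight {w : ESp n → ℝ} (hw : IsWeight w) :
    IsCubeWeight fun x => ENNReal.ofReal (w x) where
  measurable := hw.1.ennreal_ofReal
  withDensity_ne_zero Q hQ h0 := by
    have hpos : ∀ᵐ x, ENNReal.ofReal (w x) ≠ 0 := by
      filter_upwards [hw.2.2.1] with x hx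
      exact (ENNReal.ofReal_pos.2 hx).ne'
    exact hQ.volume_ne_zero
      (withDensity_absolutelyContinuous' hw.1.ennreal_ofReal.aemeasurable hpos h0)
  withDensity_ne_top Q hQ := by
    obtain ⟨c, h, hh, rfl⟩ := hQ
    exact wMeas_closedCube w c h ▸ (hw.2.2.2 _ (isCube_closedCube c hh)).ne

lemma A1Const.halfOpenA1 {w : ESp n → ℝ} {C : ℝ≥0∞} (hw : A1Const w C) :
    HalfOpenA1 (fun x => ENNReal.ofReal (w x)) C := by
  rintro _ ⟨c, h, hh, rfl⟩
  have hQ : IsHalfOpenCube (halfOpenCube c h) := ⟨c, h, hh, rfl⟩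
  have havg := hw _ (isCube_closedCube c hh)
  rw [wMeas_closedCube, ← measure_congr (halfOpenCube_ae_eq_closedCube c h),
    ← ENNReal.div_eq_inv_mul, ENNReal.div_le_iff hQ.volume_ne_zero hQ.volume_ne_top] at havg
  have hinf := ae_essInf_le (f := fun x => ENNReal.ofReal (w x))
    (μ := volume.restrict (closedCube c h))
  rw [ae_restrict_iff' (measurableSet_closedCube c h)] at hinf
  filter_upwards [hinf] with x hx hxQ
  exact havg.trans (by gcongr; exact hx (halfOpenCube_subset_closedCube c h hxQ))

lemma DyadicGrid.maximalFn_le_maxFn {D : DyadicGrid n} {w : ESp n → ℝ} {Q : Set (ESp n)}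
    (hQ : D.root ⊆ Q) {x : ESp n} (hx : x ∈ D.root) :
    D.maximalFn (volume.withDensity fun y => ENNReal.ofReal (w y)) x ≤
      maxFn (Q.indicator w) x := by
  refine iSup_le fun j => ?_
  have hsub := D.cube_subset_root hx j
  have hmem : x ∈ D.cube j x := mem_cube_self j x
  obtain ⟨c, h, hh, hcube⟩ := D.isHalfOpenCube_cube j x
  rw [hcube] at hsub hmem ⊢
  have hclosed := halfOpenCube_subset_closedCube c h
  refine le_iSup₂_of_le (closedCube c h) (isCube_closedCube c hh)
    (le_iSup_of_le (hclosed hmem) ?_)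
  rw [← measure_congr (halfOpenCube_ae_eq_closedCube c h), ← ENNReal.div_eq_inv_mul,
    withDensity_apply _ (measurableSet_halfOpenCube c h)]
  gcongr ?_ / _
  calc ∫⁻ y in halfOpenCube c h, ENNReal.ofReal (w y)
      ≤ ∫⁻ y in halfOpenCube c h, ENNReal.ofReal |Q.indicator w y| := by
        refine setLIntegral_mono' (measurableSet_halfOpenCube c h) fun y hy => ?_
        rw [indicator_of_mem (hQ (hsub hy))]
        exact ENNReal.ofReal_le_ofReal (le_abs_self _)
    _ ≤ ∫⁻ y in closedCube c h, ENNReal.ofReal |Q.indicator w y| := lintegral_mono_set hclosed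

lemma IsWeight.dyadicFujiiWilson {w : ESp n → ℝ} {C : ℝ≥0∞} (hw : IsWeight w) (hC : FW w ≤ C) :
    DyadicFujiiWilson (volume.withDensity fun x => ENNReal.ofReal (w x)) C := by
  intro D
  have hroot : IsHalfOpenCube D.root := DyadicGrid.isHalfOpenCube_root
  have hsub : D.root ⊆ closedCube D.origin D.side := halfOpenCube_subset_closedCube _ _
  have hwMeas : wMeas w (closedCube D.origin D.side) =
      volume.withDensity (fun x => ENNReal.ofReal (w x)) D.root := wMeas_closedCube _ _ _
  have hFW := (le_iSup₂ (f := fun (Q : Set (ESp n)) (_ : IsCube Q) =>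
    (wMeas w Q)⁻¹ * ∫⁻ x in Q, maxFn (Q.indicator w) x) _
    (isCube_closedCube D.origin D.side_pos)).trans hC
  rw [hwMeas, ← ENNReal.div_eq_inv_mul, ENNReal.div_le_iff
    (hw.isCubeWeight.withDensity_ne_zero _ hroot)
    (hw.isCubeWeight.withDensity_ne_top _ hroot)] at hFW
  calc ∫⁻ x in D.root, D.maximalFn (volume.withDensity fun y => ENNReal.ofReal (w y)) x
      ≤ ∫⁻ x in D.root, maxFn ((closedCube D.origin D.side).indicator w) x :=
        setLIntegral_mono' hroot.measurableSet fun x hx => DyadicGrid.maximalFn_le_maxFn hsub hx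
    _ ≤ ∫⁻ x in closedCube D.origin D.side, maxFn ((closedCube D.origin D.side).indicator w) x :=
        lintegral_mono_set hsub
    _ ≤ _ := hFW

end Weights

section WeakType

variable {n : ℕ} {u v f g : ESp n → ℝ}

lemma setOf_lt_maxFn_div_subset {t : ℝ} (ht : 0 < t) :
    {x | ENNReal.ofReal t < maxFn g x / ENNReal.ofReal (v x)} ⊆
      {x | ∃ Q, IsCube Q ∧ x ∈ Q ∧ ENNReal.ofReal (v x) * volume Q ≤
        ((ENNReal.ofReal t)⁻¹ • volume.withDensity fun y => ENNReal.ofReal |g y|) Q} := by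
  intro x hx
  rcases eq_or_ne (ENNReal.ofReal (v x)) 0 with hv0 | hv0
  · exact ⟨_, isCube_closedCube x one_pos, fun i => ⟨le_rfl, by simp⟩, by simp [hv0]⟩
  have hlt := (ENNReal.lt_div_iff_mul_lt (.inl hv0) (.inl ENNReal.ofReal_ne_top)).1 hx
  simp only [maxFn, lt_iSup_iff] at hlt
  obtain ⟨Q, hQ, hxQ, hlt⟩ := hlt
  rw [← ENNReal.div_eq_inv_mul, ENNReal.lt_div_iff_mul_lt (.inl hQ.volume_ne_zero)
    (.inl hQ.volume_ne_top)] at hlt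
  refine ⟨Q, hQ, hxQ, ?_⟩
  rw [Measure.smul_apply, smul_eq_mul, withDensity_apply', ← ENNReal.div_eq_inv_mul,
    ENNReal.le_div_iff_mul_le (.inl (ENNReal.ofReal_pos.2 ht).ne') (.inl ENNReal.ofReal_ne_top)]
  exact (by ring : _ = _).trans_le hlt.le

lemma IsWeight.wMeas_mul (hu : IsWeight u) (hv : IsWeight v) (E : Set (ESp n)) :
    wMeas (fun x => u x * v x) E =
      (volume.withDensity fun x => ENNReal.ofReal (u x)).withDensity
        (fun x => ENNReal.ofReal (v x)) E := by
  rw [wMeas_eq_withDensity, ← withDensity_mul _ hu.1.ennreal_ofReal hv.1.ennreal_ofReal]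
  simp only [ENNReal.ofReal_mul (hu.2.1 _)]
  rfl

lemma IsWeight.lintegral_withDensity_abs_mul (hu : IsWeight u) (hv : IsWeight v)
    (hf : AEMeasurable f) :
    ∫⁻ x, ENNReal.ofReal (u x) ∂(volume.withDensity fun y => ENNReal.ofReal |f y * v y|) =
      ∫⁻ x, ENNReal.ofReal (|f x| * u x * v x) := by
  have habs : AEMeasurable fun x => ENNReal.ofReal |f x * v x| :=
    (hf.mul hv.1.aemeasurable).abs.ennreal_ofReal
  rw [lintegral_withDensity_eq_lintegral_mul₀ habs hu.1.ennreal_ofReal.aemeasurable]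
  refine lintegral_congr fun x => ?_
  rw [Pi.mul_apply, ← ENNReal.ofReal_mul (abs_nonneg _), abs_mul, abs_of_nonneg (hv.2.1 x),
    mul_right_comm]

lemma wnorm_one_le {G : ESp n → ℝ≥0∞} {w : ESp n → ℝ} {C : ℝ≥0∞}
    (h : ∀ t : ℝ, 0 < t → wMeas w {x | ENNReal.ofReal t < G x} ≤ (ENNReal.ofReal t)⁻¹ * C) :
    wnorm G 1 w ≤ C := by
  refine iSup₂_le fun t ht => ?_
  rw [div_one, ENNReal.rpow_one]
  calc ENNReal.ofReal t * wMeas w {x | ENNReal.ofReal t < G x}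
      ≤ ENNReal.ofReal t * ((ENNReal.ofReal t)⁻¹ * C) := by gcongr; exact h t ht
    _ = C := ENNReal.mul_inv_cancel_left (ENNReal.ofReal_pos.2 ht).ne' ENNReal.ofReal_ne_top

end WeakType

theorem LOP_maximal_mixed_weak_type_general {n : ℕ} {Cu Cv : ℝ≥0∞} (hCu : Cu < ⊤) (hCv : Cv < ⊤) :
    ∃ C : ℝ≥0∞, C < ⊤ ∧
      ∀ u v : ESp n → ℝ, IsWeight u → IsWeight v → A1Const u Cu → FW v ≤ Cv →
        ∀ f : ESp n → ℝ, AEMeasurable f →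
          wnorm (fun x => maxFn (fun y => f y * v y) x / ENNReal.ofReal (v x)) 1
              (fun x => u x * v x)
            ≤ C * ∫⁻ x, ENNReal.ofReal (|f x| * u x * v x) := by
  obtain ⟨a, ha, ha', hdecay⟩ := exists_decay_ratio_of_dyadicFujiiWilson n hCu.ne hCv.ne
  refine ⟨12 ^ n * 64 * a ^ 2 * Cu, by finiteness, fun u v hu hv huA hvFW f hf => ?_⟩
  obtain ⟨hμ, hσ, hμv⟩ := hdecay _ _ hu.isCubeWeight hv.isCubeWeight
    (huA.halfOpenA1.dyadicFujiiWilson hu.1.ennreal_ofReal) (hv.dyadicFujiiWilson hvFW)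
  refine wnorm_one_le fun t ht => ?_
  rw [hu.wMeas_mul hv]
  refine (measure_mono (setOf_lt_maxFn_div_subset ht)).trans ?_
  refine (withDensity_exists_isCube_average_le hμ hσ hμv hv.isCubeWeight
    (fun _ => ENNReal.ofReal_ne_top) ha ha' (hu.1.ennreal_ofReal.const_mul Cu) fun D =>
      Measure.ae_smul_measure ((withDensity_absolutelyContinuous _ _).ae_le
        (huA.halfOpenA1.ae_forall_mem_cubes D)) _).trans_eq ?_
  rw [lintegral_smul_measure, smul_eq_mul, lintegral_const_mul _ hu.1.ennreal_ofReal,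
    hu.lintegral_withDensity_abs_mul hv hf]
  ring

/-- **Li–Ombrosi–Pérez: maximal-function case of Sawyer's conjecture.**  If `u ∈ A₁` and
`v ∈ A_∞`, then there is a constant `C`, depending only on the `A₁` constant of `u` and the
`A_∞` (Fujii–Wilson) constant of `v`, such that for every locally integrable `f`,
`‖M(fv)/v‖_{L^{1,∞}(uv)} ≤ C ∫ |f| u v`. -/
theorem LOP_maximal_mixed_weak_type {n : ℕ} (hn : 0 < n)
    (Cu Cv : ℝ≥0∞) (hCu : Cu < ⊤) (hCv : Cv < ⊤) :
    ∃ C : ℝ≥0∞, C < ⊤ ∧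
      ∀ u v : ESp n → ℝ, IsWeight u → IsWeight v →
        A1Const u Cu → IsAinfty v → FW v ≤ Cv →
        ∀ f : ESp n → ℝ, LocallyIntegrable f volume →
          wnorm (fun x => maxFn (fun y => f y * v y) x / ENNReal.ofReal (v x)) 1
              (fun x => u x * v x)
            ≤ C * ∫⁻ x, ENNReal.ofReal (|f x| * u x * v x) := by
  obtain ⟨C, hC, hbound⟩ := LOP_maximal_mixed_weak_type_general (n := n) hCu hCv
  exact ⟨C, hC, fun u v hu hv huA _ hvFW f hf =>
    hbound u v hu hv huA hvFW f hf.aestronglyMeasurable.aemeasurable⟩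

end
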